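/- arXiv:1607.01457 — 7 statements merged into one kernel-verified Lean document; each statement's English description precedes it below -/
import Mathlib

section
/- For every m ≥ 7 and every e ∈ {0, 1}, the images σ₀, σ₁, σ₂ of the generators in the presented group M(m, e) satisfy the intersection condition Subgroup.closure {σ₀, σ₁} ⊓ Subgroup.closure {σ₁, σ₂} = Subgroup.closure {σ₁}. Consequently (M(m, e), (σ₀, σ₁, σ₂)) is a connected string C-group of rank 3. -/
/-!
The group `M(m, e)` has small quotients that already detect everything that is needed.

* All relators have even degree in each generator, so `M(m, e)` maps onto `(ℤ/2)³` with `σ i`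
  going to the `i`-th basis vector (`parityHom`). An element of the subgroup generated by
  `{σ j | j ∈ J}` has trivial `i`-th parity for `i ∉ J`. When the generators indexed by `J` commute,
  that subgroup is elementary abelian and its elements are determined by their parities, which gives
  the intersection condition for `J` against every `K` (`inter_of_commuting`).
* The only remaining case is `J = {0, 1}`, `K = {1, 2}`. The group maps onto the symmetry group
  `D₄` of a square, with `σ₀` an edge reflection, `σ₁` the diagonal reflection through the
  vertex `0`, and `σ₂` acting trivially (`squareHom`). The subgroup `⟨σ₁, σ₂⟩` fixes the vertex `0`,
  while `⟨σ₀, σ₁⟩` is covered by four left cosets of `⟨σ₁⟩`, which send the vertex `0` to four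
  distinct vertices (`dihedral_cosets`). Hence the intersection is `⟨σ₁⟩`.
* `squareHom` shows that `σ₀σ₁` has order greater than `2`. The map `dualHom`, which
  interchanges the roles of `σ₀` and `σ₂`, shows the same for `σ₁σ₂`; it respects the last
  relation because `4 ∣ 2 ^ (m - 4)`.
-/


/-- `(G, s)` is a string C-group: `s` is an injective family of involutions
generating `G`, satisfying the string condition and the intersection condition. -/
def IsStringCGroup {G : Type*} [Group G] {n : ℕ} (s : Fin n → G) : Prop :=
  Function.Injective s ∧
  (∀ i, s i ≠ 1 ∧ (s i) ^ 2 = 1) ∧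
  Subgroup.closure (Set.range s) = ⊤ ∧
  (∀ i j : Fin n, (i : ℕ) + 2 ≤ (j : ℕ) → Commute (s i) (s j)) ∧
  (∀ J K : Set (Fin n),
    Subgroup.closure (s '' J) ⊓ Subgroup.closure (s '' K) =
      Subgroup.closure (s '' (J ∩ K)))

/-- A string C-group is connected if adjacent generators have product of order > 2. -/
def IsConnectedFamily {G : Type*} [Group G] {n : ℕ} (s : Fin n → G) : Prop :=
  ∀ (i : ℕ) (h1 : i < n) (h2 : i + 1 < n), 2 < orderOf (s ⟨i, h1⟩ * s ⟨i + 1, h2⟩)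

/-- The relation set of the presented group `M(m, e)` on generators
`x₀, x₁, x₂`: relations `x₀², x₁², x₂², (x₀x₁)⁴, (x₀x₂)², (x₁x₂)^(2^(m-3))`,
and `(x₀x₁x₂x₁)² · (x₂x₁)^(2^(m-4)·e)`. -/
def Mrels (m e : ℕ) : Set (FreeGroup (Fin 3)) :=
  {(FreeGroup.of 0) ^ 2, (FreeGroup.of 1) ^ 2, (FreeGroup.of 2) ^ 2,
    (FreeGroup.of 0 * FreeGroup.of 1) ^ 4,
    (FreeGroup.of 0 * FreeGroup.of 2) ^ 2,
    (FreeGroup.of 1 * FreeGroup.of 2) ^ (2 ^ (m - 3)),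
    (FreeGroup.of 0 * FreeGroup.of 1 * FreeGroup.of 2 * FreeGroup.of 1) ^ 2 *
      (FreeGroup.of 2 * FreeGroup.of 1) ^ (2 ^ (m - 4) * e)}

/-- The presented group `M(m, e)`. -/
abbrev Mgrp (m e : ℕ) : Type := PresentedGroup (Mrels m e)

/-- `σ i`: the image in `M(m, e)` of the generator `xᵢ`. -/
def Msigma (m e : ℕ) (i : Fin 3) : Mgrp m e := PresentedGroup.of i

open Subgroup

/-- Evaluation of a triple in a group satisfying the relations of `M(m, e)`. -/
def Mlift {H : Type*} [Group H] (m e : ℕ) (f : Fin 3 → H)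
    (h0 : f 0 ^ 2 = 1) (h1 : f 1 ^ 2 = 1) (h2 : f 2 ^ 2 = 1) (h01 : (f 0 * f 1) ^ 4 = 1)
    (h02 : (f 0 * f 2) ^ 2 = 1) (h12 : (f 1 * f 2) ^ (2 ^ (m - 3)) = 1)
    (h : (f 0 * f 1 * f 2 * f 1) ^ 2 * (f 2 * f 1) ^ (2 ^ (m - 4) * e) = 1) : Mgrp m e →* H :=
  PresentedGroup.toGroup (f := f) (by
    intro r hr
    simp only [Mrels, Set.mem_insert_iff, Set.mem_singleton_iff] at hr
    rcases hr with rfl | rfl | rfl | rfl | rfl | rfl | rfl <;> simpa)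

theorem Mlift_sigma {H : Type*} [Group H] (m e : ℕ) (f : Fin 3 → H) (h0 h1 h2 h01 h02 h12 h)
    (i : Fin 3) : Mlift m e f h0 h1 h2 h01 h02 h12 h (Msigma m e i) = f i :=
  PresentedGroup.toGroup.of _

theorem two_pow_dvd {a b : ℕ} (h : a ≤ b) (e : ℕ) : 2 ^ a ∣ 2 ^ b * e :=
  Dvd.dvd.mul_right (pow_dvd_pow 2 h) e

theorem pow_eq_one_of_dvd' {H : Type*} [Group H] {x : H} {a b : ℕ} (h : x ^ a = 1) (hd : a ∣ b) :
    x ^ b = 1 := by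
  obtain ⟨c, rfl⟩ := hd
  rw [pow_mul, h, one_pow]

/-- The abelianization `M(m, e) → (ℤ/2)³`, written multiplicatively. -/
def parityHom (m e : ℕ) (hm : 7 ≤ m) : Mgrp m e →* Multiplicative (Fin 3 → ZMod 2) :=
  Mlift m e (fun i => Multiplicative.ofAdd (Pi.single i 1))
    (by decide) (by decide) (by decide) (by decide) (by decide)
    (pow_eq_one_of_dvd' (a := 2 ^ 1) (by decide) (pow_dvd_pow 2 (by omega)))
    (by
      rw [pow_eq_one_of_dvd' (a := 2 ^ 1) (by decide) (two_pow_dvd (by omega) e)]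
      decide)

/-- The action of `M(m, e)` on the vertices `0, 1, 2, 3` of a square, with `σ₂` acting trivially. -/
def squareHom (m e : ℕ) (hm : 7 ≤ m) : Mgrp m e →* Equiv.Perm (Fin 4) :=
  Mlift m e ![Equiv.swap 0 1 * Equiv.swap 2 3, Equiv.swap 1 3, 1]
    (by decide) (by decide) (by decide) (by decide) (by decide)
    (pow_eq_one_of_dvd' (a := 2 ^ 1) (by decide) (pow_dvd_pow 2 (by omega)))
    (by
      rw [pow_eq_one_of_dvd' (a := 2 ^ 1) (by decide) (two_pow_dvd (by omega) e)]
      decide)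

/-- The action of `M(m, e)` on the vertices of a square with the roles of `σ₀` and `σ₂`
interchanged. -/
def dualHom (m e : ℕ) (hm : 7 ≤ m) : Mgrp m e →* Equiv.Perm (Fin 4) :=
  Mlift m e ![1, Equiv.swap 1 3, Equiv.swap 0 1 * Equiv.swap 2 3]
    (by decide) (by decide) (by decide) (by decide) (by decide)
    (pow_eq_one_of_dvd' (a := 2 ^ 2) (by decide) (pow_dvd_pow 2 (by omega)))
    (by
      rw [pow_eq_one_of_dvd' (a := 2 ^ 2) (by decide) (two_pow_dvd (by omega) e)]
      decide)

theorem parityHom_sigma (m e : ℕ) (hm : 7 ≤ m) (i : Fin 3) :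
    parityHom m e hm (Msigma m e i) = Multiplicative.ofAdd (Pi.single i 1) :=
  Mlift_sigma ..

theorem squareHom_sigma (m e : ℕ) (hm : 7 ≤ m) (i : Fin 3) :
    squareHom m e hm (Msigma m e i) =
      (![Equiv.swap 0 1 * Equiv.swap 2 3, Equiv.swap 1 3, 1] : Fin 3 → Equiv.Perm (Fin 4)) i :=
  Mlift_sigma ..

theorem dualHom_sigma (m e : ℕ) (hm : 7 ≤ m) (i : Fin 3) :
    dualHom m e hm (Msigma m e i) =
      (![1, Equiv.swap 1 3, Equiv.swap 0 1 * Equiv.swap 2 3] : Fin 3 → Equiv.Perm (Fin 4)) i :=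
  Mlift_sigma ..

theorem rel_eq_one {m e : ℕ} {r : FreeGroup (Fin 3)} (h : r ∈ Mrels m e) :
    PresentedGroup.mk (Mrels m e) r = 1 :=
  PresentedGroup.one_of_mem h

theorem sigma_sq (m e : ℕ) (i : Fin 3) : Msigma m e i ^ 2 = 1 := by
  have h : (FreeGroup.of i) ^ 2 ∈ Mrels m e := by fin_cases i <;> simp [Mrels]
  exact rel_eq_one h

theorem sigma_mul_self (m e : ℕ) (i : Fin 3) : Msigma m e i * Msigma m e i = 1 := by
  rw [← sq, sigma_sq]

theorem sigma_inv (m e : ℕ) (i : Fin 3) : (Msigma m e i)⁻¹ = Msigma m e i :=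
  inv_eq_of_mul_eq_one_left (sigma_mul_self m e i)

theorem sigma_comm (m e : ℕ) : Msigma m e 0 * Msigma m e 2 = Msigma m e 2 * Msigma m e 0 := by
  have h : (FreeGroup.of 0 * FreeGroup.of 2) ^ 2 ∈ Mrels m e := by simp [Mrels]
  have h' : (Msigma m e 0 * Msigma m e 2) ^ 2 = 1 := by exact rel_eq_one h
  rw [sq] at h'
  simpa [sigma_inv] using eq_inv_of_mul_eq_one_left h'

theorem sigma_braid (m e : ℕ) :
    Msigma m e 1 * (Msigma m e 0 * Msigma m e 1 * Msigma m e 0) =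
      Msigma m e 0 * Msigma m e 1 * Msigma m e 0 * Msigma m e 1 := by
  have h : (FreeGroup.of 0 * FreeGroup.of 1) ^ 4 ∈ Mrels m e := by simp [Mrels]
  have h' : (Msigma m e 0 * Msigma m e 1) ^ 4 = 1 := by exact rel_eq_one h
  rw [show 4 = 2 + 2 from rfl, pow_add] at h'
  have := eq_inv_of_mul_eq_one_left h'
  simp only [sq, mul_inv_rev, sigma_inv] at this
  simpa only [mul_assoc] using this.symm

theorem closure_sigma_induction {m e : ℕ} {J : Set (Fin 3)} {p : Mgrp m e → Prop} (h1 : p 1)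
    (hmul : ∀ j ∈ J, ∀ g, p g → p (Msigma m e j * g)) {g : Mgrp m e}
    (hg : g ∈ closure (Msigma m e '' J)) : p g := by
  induction hg using closure_induction_left with
  | one => exact h1
  | mul_left x hx y _ ih =>
    obtain ⟨j, hj, rfl⟩ := hx
    exact hmul j hj y ih
  | inv_mul_cancel x hx y _ ih =>
    obtain ⟨j, hj, rfl⟩ := hx
    rw [sigma_inv]
    exact hmul j hj y ih

theorem parity_eq_zero {m e : ℕ} (hm : 7 ≤ m) {J : Set (Fin 3)} {g : Mgrp m e}
    (hg : g ∈ closure (Msigma m e '' J)) {i : Fin 3} (hi : i ∉ J) :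
    (parityHom m e hm g).toAdd i = 0 := by
  refine closure_sigma_induction (p := fun g => (parityHom m e hm g).toAdd i = 0) (by simp) ?_ hg
  intro j hj g ih
  have hij : i ≠ j := fun h => hi (h ▸ hj)
  simp [parityHom_sigma, ih, hij]

theorem mem_of_parity_ne {m e : ℕ} (hm : 7 ≤ m) {K : Set (Fin 3)} {g : Mgrp m e}
    (hg : g ∈ closure (Msigma m e '' K)) (i : Fin 3)
    (hi : (parityHom m e hm g).toAdd i ≠ 0) : i ∈ K := by
  by_contra h
  exact hi (parity_eq_zero hm hg h)

theorem sigma_mem {m e : ℕ} {J : Set (Fin 3)} {i : Fin 3} (h : i ∈ J) :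
    Msigma m e i ∈ closure (Msigma m e '' J) :=
  subset_closure ⟨i, h, rfl⟩

/-- The intersection condition when the generators indexed by `J` commute with each other: the
elements of the elementary abelian group they generate can be read off from their parities. -/
theorem inter_of_commuting {m e : ℕ} (hm : 7 ≤ m) {J K : Set (Fin 3)}
    (hJ : J ⊆ {1} ∨ 1 ∉ J) {g : Mgrp m e} (hg : g ∈ closure (Msigma m e '' J))
    (hgK : g ∈ closure (Msigma m e '' K)) : g ∈ closure (Msigma m e '' (J ∩ K)) := by
  rcases hJ with hJ | hJ
  · have key : g = 1 ∨ 1 ∈ J ∧ g = Msigma m e 1 := by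
      refine closure_sigma_induction (p := fun g => g = 1 ∨ 1 ∈ J ∧ g = Msigma m e 1)
        (Or.inl rfl) ?_ hg
      intro j hj g ih
      obtain rfl : j = 1 := hJ hj
      rcases ih with rfl | ⟨_, rfl⟩
      · simp [hj]
      · exact Or.inl (sigma_mul_self m e 1)
    rcases key with rfl | ⟨h, rfl⟩
    · exact one_mem _
    · exact sigma_mem ⟨h, mem_of_parity_ne hm hgK 1 (by simp [parityHom_sigma])⟩
  · have key : g = 1 ∨ 0 ∈ J ∧ g = Msigma m e 0 ∨ 2 ∈ J ∧ g = Msigma m e 2 ∨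
        0 ∈ J ∧ 2 ∈ J ∧ g = Msigma m e 0 * Msigma m e 2 := by
      refine closure_sigma_induction (p := fun g => g = 1 ∨ 0 ∈ J ∧ g = Msigma m e 0 ∨
        2 ∈ J ∧ g = Msigma m e 2 ∨ 0 ∈ J ∧ 2 ∈ J ∧ g = Msigma m e 0 * Msigma m e 2)
        (Or.inl rfl) ?_ hg
      intro j hj g ih
      have hj' : j = 0 ∨ j = 2 := by
        fin_cases j
        · exact Or.inl rfl
        · exact absurd hj hJ
        · exact Or.inr rfl
      rcases hj' with rfl | rfl
      · rcases ih with rfl | ⟨_, rfl⟩ | ⟨h, rfl⟩ | ⟨_, h, rfl⟩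
        · simp [hj]
        · simp [sigma_mul_self]
        · simp [hj, h]
        · simp [← mul_assoc, sigma_mul_self, h]
      · rcases ih with rfl | ⟨h, rfl⟩ | ⟨_, rfl⟩ | ⟨h, _, rfl⟩
        · simp [hj]
        · simp [hj, h, sigma_comm]
        · simp [sigma_mul_self]
        · rw [sigma_comm]
          simp [← mul_assoc, sigma_mul_self, h]
    rcases key with rfl | ⟨h, rfl⟩ | ⟨h, rfl⟩ | ⟨h, h', rfl⟩
    · exact one_mem _
    · exact sigma_mem ⟨h, mem_of_parity_ne hm hgK 0 (by simp [parityHom_sigma])⟩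
    · exact sigma_mem ⟨h, mem_of_parity_ne hm hgK 2 (by simp [parityHom_sigma])⟩
    · exact mul_mem
        (sigma_mem ⟨h, mem_of_parity_ne hm hgK 0 (by simp [parityHom_sigma])⟩)
        (sigma_mem ⟨h', mem_of_parity_ne hm hgK 2 (by simp [parityHom_sigma])⟩)

/-- The dihedral group `⟨σ₀, σ₁⟩` is covered by the left cosets of `⟨σ₁⟩` represented by
`1`, `σ₀`, `σ₁σ₀` and `σ₀σ₁σ₀`. -/
theorem dihedral_cosets {m e : ℕ} {g : Mgrp m e} (hg : g ∈ closure (Msigma m e '' {0, 1})) :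
    ∃ h ∈ closure {Msigma m e 1}, g = h ∨ g = Msigma m e 0 * h ∨
      g = Msigma m e 1 * Msigma m e 0 * h ∨ g = Msigma m e 0 * Msigma m e 1 * Msigma m e 0 * h := by
  refine closure_sigma_induction (p := fun g => ∃ h ∈ closure {Msigma m e 1}, g = h ∨
    g = Msigma m e 0 * h ∨ g = Msigma m e 1 * Msigma m e 0 * h ∨
    g = Msigma m e 0 * Msigma m e 1 * Msigma m e 0 * h) ⟨1, one_mem _, Or.inl rfl⟩ ?_ hg
  rintro j (rfl | rfl) g ⟨h, hh, ih⟩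
  · refine ⟨h, hh, ?_⟩
    rcases ih with rfl | rfl | rfl | rfl
    · exact Or.inr (Or.inl rfl)
    · left
      rw [← mul_assoc, sigma_mul_self, one_mul]
    · right; right; right
      simp only [mul_assoc]
    · right; right; left
      simp only [← mul_assoc, sigma_mul_self, one_mul]
  · have hh' : Msigma m e 1 * h ∈ closure {Msigma m e 1} := mul_mem (subset_closure rfl) hh
    rcases ih with rfl | rfl | rfl | rfl
    · exact ⟨_, hh', Or.inl rfl⟩
    · exact ⟨h, hh, Or.inr (Or.inr (Or.inl (mul_assoc _ _ _).symm))⟩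
    · refine ⟨h, hh, Or.inr (Or.inl ?_)⟩
      simp only [← mul_assoc, sigma_mul_self, one_mul]
    · refine ⟨_, hh', Or.inr (Or.inr (Or.inr ?_))⟩
      rw [← mul_assoc, sigma_braid, mul_assoc _ (Msigma m e 1) h]

theorem square_fixes {m e : ℕ} (hm : 7 ≤ m) {g : Mgrp m e}
    (hg : g ∈ closure (Msigma m e '' {1, 2})) : squareHom m e hm g 0 = 0 := by
  refine closure_sigma_induction (p := fun g => squareHom m e hm g 0 = 0) (by simp) ?_ hg
  rintro j (rfl | rfl) g ih
  · rw [map_mul, Equiv.Perm.mul_apply, ih, squareHom_sigma]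
    decide
  · rw [map_mul, Equiv.Perm.mul_apply, ih, squareHom_sigma]
    decide

theorem inter_main {m e : ℕ} (hm : 7 ≤ m) {g : Mgrp m e}
    (hg : g ∈ closure (Msigma m e '' {0, 1})) (hg' : g ∈ closure (Msigma m e '' {1, 2})) :
    g ∈ closure {Msigma m e 1} := by
  have hfix := square_fixes hm hg'
  obtain ⟨h, hh, hc⟩ := dihedral_cosets hg
  have hhfix : squareHom m e hm h 0 = 0 := by
    apply square_fixes
    exact closure_mono (by simp) hh
  rcases hc with rfl | rfl | rfl | rfl
  · exact hh
  all_goals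
    simp only [map_mul, Equiv.Perm.mul_apply, hhfix, squareHom_sigma] at hfix
    exact absurd hfix (by decide)

theorem sigma_injective (m e : ℕ) (hm : 7 ≤ m) : Function.Injective (Msigma m e) := by
  intro i j hij
  have h := congrArg (fun g => (parityHom m e hm g).toAdd i) hij
  by_contra hne
  simp [parityHom_sigma, hne] at h

theorem sigma_ne_one (m e : ℕ) (hm : 7 ≤ m) (i : Fin 3) : Msigma m e i ≠ 1 := by
  intro h
  have h' := congrArg (fun g => (parityHom m e hm g).toAdd i) h
  simp [parityHom_sigma] at h'

theorem sigma_closure_range (m e : ℕ) : closure (Set.range (Msigma m e)) = ⊤ :=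
  PresentedGroup.closure_range_of _

theorem inter_all {m e : ℕ} (hm : 7 ≤ m) (J K : Set (Fin 3)) :
    closure (Msigma m e '' J) ⊓ closure (Msigma m e '' K) = closure (Msigma m e '' (J ∩ K)) := by
  refine le_antisymm ?_ (le_inf (closure_mono (Set.image_mono Set.inter_subset_left))
    (closure_mono (Set.image_mono Set.inter_subset_right)))
  rintro g ⟨hgJ, hgK⟩
  by_cases hJ : J ⊆ {1} ∨ 1 ∉ J
  · exact inter_of_commuting hm hJ hgJ hgK
  by_cases hK : K ⊆ {1} ∨ 1 ∉ K
  · rw [Set.inter_comm]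
    exact inter_of_commuting hm hK hgK hgJ
  push Not at hJ hK
  by_cases hJK : J ⊆ K
  · rwa [Set.inter_eq_left.mpr hJK]
  by_cases hKJ : K ⊆ J
  · rwa [Set.inter_eq_right.mpr hKJ]
  -- Both sets contain `1` and are incomparable, so they are `{0, 1}` and `{1, 2}` in some order.
  rw [Set.not_subset] at hJK hKJ
  obtain ⟨a, haJ, haK⟩ := hJK
  obtain ⟨b, hbK, hbJ⟩ := hKJ
  have ha1 : a ≠ 1 := fun h => haK (h ▸ hK.2)
  have hb1 : b ≠ 1 := fun h => hbJ (h ▸ hJ.2)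
  have hab : a ≠ b := fun h => haK (h ▸ hbK)
  have hcl : closure {Msigma m e 1} ≤ closure (Msigma m e '' (J ∩ K)) := by
    rw [closure_le, Set.singleton_subset_iff]
    exact sigma_mem ⟨hJ.2, hK.2⟩
  have sub0 : ∀ L : Set (Fin 3), 2 ∉ L → L ⊆ {0, 1} := by
    intro L h x hx
    have : x ≠ 2 := fun h' => h (h' ▸ hx)
    simp only [Set.mem_insert_iff, Set.mem_singleton_iff]
    omega
  have sub2 : ∀ L : Set (Fin 3), 0 ∉ L → L ⊆ {1, 2} := by
    intro L h x hx
    have : x ≠ 0 := fun h' => h (h' ▸ hx)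
    simp only [Set.mem_insert_iff, Set.mem_singleton_iff]
    omega
  have hcase : a = 0 ∧ b = 2 ∨ a = 2 ∧ b = 0 := by omega
  apply hcl
  rcases hcase with ⟨rfl, rfl⟩ | ⟨rfl, rfl⟩
  · exact inter_main hm (closure_mono (Set.image_mono (sub0 J hbJ)) hgJ)
      (closure_mono (Set.image_mono (sub2 K haK)) hgK)
  · exact inter_main hm (closure_mono (Set.image_mono (sub0 K haK)) hgK)
      (closure_mono (Set.image_mono (sub2 J hbJ)) hgJ)

/-- Finiteness of the order of `x` is needed because `orderOf` is `0` on elements of infinite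
order. -/
theorem two_lt_orderOf {G H : Type*} [Group G] [Group H] (f : G →* H) {x : G} {n : ℕ} (hn : 0 < n)
    (hx : x ^ n = 1) (hf : f x ^ 2 ≠ 1) : 2 < orderOf x := by
  have hpos : 0 < orderOf x := orderOf_pos_iff.mpr (isOfFinOrder_iff_pow_eq_one.mpr ⟨n, hn, hx⟩)
  by_contra! hle
  apply hf
  have hd : orderOf x ∣ 2 := by
    have h12 : orderOf x = 1 ∨ orderOf x = 2 := by omega
    rcases h12 with h | h <;> simp [h]
  rw [← map_pow, orderOf_dvd_iff_pow_eq_one.mp hd, map_one]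

/-- For m ≥ 7 and e ∈ {0, 1}, the generator images σ₀, σ₁, σ₂ of
M(m, e) satisfy the intersection condition ⟨σ₀, σ₁⟩ ⊓ ⟨σ₁, σ₂⟩ = ⟨σ₁⟩, and
(M(m, e), (σ₀, σ₁, σ₂)) is a connected string C-group of rank 3. -/
theorem stmt_10 (m e : ℕ) (hm : 7 ≤ m) (he : e ≤ 1) :
    Subgroup.closure {Msigma m e 0, Msigma m e 1} ⊓
        Subgroup.closure {Msigma m e 1, Msigma m e 2} =
      Subgroup.closure {Msigma m e 1} ∧
    IsStringCGroup (Msigma m e) ∧ IsConnectedFamily (Msigma m e) := by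
  refine ⟨?_, ⟨sigma_injective m e hm, fun i => ⟨sigma_ne_one m e hm i, sigma_sq m e i⟩,
    sigma_closure_range m e, ?_, inter_all hm⟩, ?_⟩
  · have h := inter_all (e := e) hm {0, 1} {1, 2}
    have hset : ({0, 1} ∩ {1, 2} : Set (Fin 3)) = {1} := by
      ext x
      fin_cases x <;> simp
    rw [hset] at h
    simpa only [Set.image_pair, Set.image_singleton] using h
  · intro i j hij
    obtain rfl : i = 0 := by omega
    obtain rfl : j = 2 := by omega
    exact sigma_comm m e
  · intro i h1 h2
    obtain rfl | rfl : i = 0 ∨ i = 1 := by omega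
    · have h : (FreeGroup.of 0 * FreeGroup.of 1) ^ 4 ∈ Mrels m e := by simp [Mrels]
      have h' : (Msigma m e 0 * Msigma m e 1) ^ 4 = 1 := by exact rel_eq_one h
      refine two_lt_orderOf (squareHom m e hm) (by norm_num) h' ?_
      change (squareHom m e hm (Msigma m e 0 * Msigma m e 1)) ^ 2 ≠ 1
      rw [map_mul, squareHom_sigma, squareHom_sigma]
      decide
    · have h : (FreeGroup.of 1 * FreeGroup.of 2) ^ (2 ^ (m - 3)) ∈ Mrels m e := by simp [Mrels]
      have h' : (Msigma m e 1 * Msigma m e 2) ^ (2 ^ (m - 3)) = 1 := by exact rel_eq_one h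
      refine two_lt_orderOf (dualHom m e hm) (by positivity) h' ?_
      change (dualHom m e hm (Msigma m e 1 * Msigma m e 2)) ^ 2 ≠ 1
      rw [map_mul, dualHom_sigma, dualHom_sigma]
      decide
end

section
/- For every m ≥ 7, in the presented group M(m, 1) the identities σ₀ * σ₂ * σ₀ = σ₂ and σ₀ * (σ₁σ₂σ₁) * σ₀ = (σ₁σ₂σ₁) * (σ₂σ₁σ₂σ₁)^(2^(m−5)) hold. Consequently the subgroup Subgroup.closure {σ₂, σ₁σ₂σ₁} is invariant under conjugation by σ₀. -/
/-- The conjugation formula in any group satisfying the relevant relations of `M(m, 1)`, with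
`N` standing for `2^(m-5)`. -/
lemma conj_formula {G : Type*} [Group G] {a b c : G} {N : ℕ} (hb : b * b = 1)
    (hc : c * c = 1)
    (h : (a * b * c * b) ^ 2 * (c * b) ^ (2 * N) = 1) :
    a * (b * c * b) * a = b * c * b * (c * b * c * b) ^ N := by
  have hb' : b⁻¹ = b := inv_eq_of_mul_eq_one_left hb
  have hc' : c⁻¹ = c := inv_eq_of_mul_eq_one_left hc
  have hpow : (c * b * c * b) ^ N = (c * b) ^ (2 * N) := by
    rw [pow_mul, pow_two]; simp only [mul_assoc]
  have ht' : (b * c * b)⁻¹ = b * c * b := by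
    simp only [mul_inv_rev, hb', hc', mul_assoc]
  have hconj : b * c * b * (c * b) * (b * c * b)⁻¹ = (c * b)⁻¹ := by
    calc b * c * b * (c * b) * (b * c * b)⁻¹ = b * c := by group
      _ = (c * b)⁻¹ := by rw [mul_inv_rev, hb', hc']
  rw [hpow]
  have hzconj : b * c * b * (c * b) ^ (2 * N) * (b * c * b)⁻¹ = ((c * b) ^ (2 * N))⁻¹ := by
    rw [← conj_pow, hconj, inv_pow]
  have hzz : (a * b * c * b) ^ 2 = ((c * b) ^ (2 * N))⁻¹ := eq_inv_of_mul_eq_one_left h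
  have hat : a * (b * c * b) * a * (b * c * b) = ((c * b) ^ (2 * N))⁻¹ := by
    rw [← hzz, pow_two]; simp only [mul_assoc]
  rw [← hzconj] at hat
  rw [ht'] at hat
  exact mul_right_cancel hat

/-- For m ≥ 7, in M(m, 1) we have σ₀σ₂σ₀ = σ₂ and
σ₀(σ₁σ₂σ₁)σ₀ = (σ₁σ₂σ₁)(σ₂σ₁σ₂σ₁)^(2^(m-5)); hence ⟨σ₂, σ₁σ₂σ₁⟩ is invariant
under conjugation by σ₀. -/
theorem stmt_12 (m : ℕ) (hm : 7 ≤ m) :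
    Msigma m 1 0 * Msigma m 1 2 * Msigma m 1 0 = Msigma m 1 2 ∧
    Msigma m 1 0 * (Msigma m 1 1 * Msigma m 1 2 * Msigma m 1 1) * Msigma m 1 0 =
      (Msigma m 1 1 * Msigma m 1 2 * Msigma m 1 1) *
        (Msigma m 1 2 * Msigma m 1 1 * Msigma m 1 2 * Msigma m 1 1) ^ (2 ^ (m - 5)) ∧
    (∀ g ∈ Subgroup.closure
        {Msigma m 1 2, Msigma m 1 1 * Msigma m 1 2 * Msigma m 1 1},
      Msigma m 1 0 * g * (Msigma m 1 0)⁻¹ ∈ Subgroup.closure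
        {Msigma m 1 2, Msigma m 1 1 * Msigma m 1 2 * Msigma m 1 1}) := by
  have rel : ∀ r ∈ Mrels m 1, PresentedGroup.mk (Mrels m 1) r = 1 := fun r hr =>
    PresentedGroup.one_of_mem hr
  have h0 := rel (FreeGroup.of 0 ^ 2) (by simp [Mrels])
  have h1 := rel (FreeGroup.of 1 ^ 2) (by simp [Mrels])
  have h2 := rel (FreeGroup.of 2 ^ 2) (by simp [Mrels])
  have h02 := rel ((FreeGroup.of 0 * FreeGroup.of 2) ^ 2) (by simp [Mrels])
  have hl := rel ((FreeGroup.of 0 * FreeGroup.of 1 * FreeGroup.of 2 * FreeGroup.of 1) ^ 2 *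
      (FreeGroup.of 2 * FreeGroup.of 1) ^ (2 ^ (m - 4) * 1)) (by simp [Mrels])
  have hmk : ∀ i, PresentedGroup.mk (Mrels m 1) (FreeGroup.of i) = Msigma m 1 i := fun _ => rfl
  simp only [map_mul, map_pow, hmk] at h0 h1 h2 h02 hl
  generalize Msigma m 1 0 = a at *
  generalize Msigma m 1 1 = b at *
  generalize Msigma m 1 2 = c at *
  have e4 : 2 ^ (m - 4) * 1 = 2 * 2 ^ (m - 5) := by
    rw [show m - 4 = m - 5 + 1 by omega, pow_add]; ring
  rw [e4] at hl
  rw [pow_two] at h0 h1 h2 h02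
  have hA : a * c * a = c := by
    have h : a * c * a * c = c * c := by rw [h2, ← h02]; simp only [mul_assoc]
    exact mul_right_cancel h
  have hB := conj_formula h1 h2 hl
  refine ⟨hA, hB, ?_⟩
  have ha' : a⁻¹ = a := inv_eq_of_mul_eq_one_left h0
  have hcm : c ∈ Subgroup.closure {c, b * c * b} := Subgroup.subset_closure (by simp)
  have htm : b * c * b ∈ Subgroup.closure {c, b * c * b} := Subgroup.subset_closure (by simp)
  suffices hle : Subgroup.closure {c, b * c * b} ≤
      (Subgroup.closure {c, b * c * b}).comap (MulAut.conj a).toMonoidHom from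
    fun g hg => hle hg
  have h1' : a * c * a⁻¹ ∈ Subgroup.closure {c, b * c * b} := by
    rwa [ha', hA]
  have h2' : a * (b * c * b) * a⁻¹ ∈ Subgroup.closure {c, b * c * b} := by
    rw [ha', hB]
    refine mul_mem htm (pow_mem ?_ _)
    rw [show c * b * c * b = c * (b * c * b) by simp only [mul_assoc]]
    exact mul_mem hcm htm
  rw [Subgroup.closure_le, Set.insert_subset_iff, Set.singleton_subset_iff]
  exact ⟨h1', h2'⟩
end

section
/- For every m ≥ 7 and every e ∈ {0, 1}, in the presented group M(m, e) set H₀ = Subgroup.closure {σ₀, σ₁σ₀σ₁} and H₂ = Subgroup.closure {σ₂, σ₁σ₂σ₁}. Then H₀ is isomorphic to the Klein four-group (ZMod 2 × ZMod 2), H₂ is isomorphic to DihedralGroup (2^(m−4)), H₀ ⊓ H₂ is trivial, the join H₀ ⊔ H₂ has cardinality 2^(m−1), and (H₀ ⊔ H₂) ⊓ Subgroup.closure {σ₁} is trivial. -/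
/-! ### Homomorphisms out of `M(m, e)` -/

section Relations

variable (m e : ℕ)

/-- The defining relations hold in `M(m, e)`. -/
lemma Msigma_rels :
    Msigma m e 0 ^ 2 = 1 ∧ Msigma m e 1 ^ 2 = 1 ∧ Msigma m e 2 ^ 2 = 1 ∧
    (Msigma m e 0 * Msigma m e 1) ^ 4 = 1 ∧ (Msigma m e 0 * Msigma m e 2) ^ 2 = 1 ∧
    (Msigma m e 1 * Msigma m e 2) ^ (2 ^ (m - 3)) = 1 ∧
    (Msigma m e 0 * Msigma m e 1 * Msigma m e 2 * Msigma m e 1) ^ 2 *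
      (Msigma m e 2 * Msigma m e 1) ^ (2 ^ (m - 4) * e) = 1 := by
  have key : ∀ r ∈ Mrels m e, PresentedGroup.mk (Mrels m e) r = 1 := fun r hr =>
    (QuotientGroup.eq_one_iff r).2 (Subgroup.subset_normalClosure hr)
  have hof : ∀ i, PresentedGroup.mk (Mrels m e) (FreeGroup.of i) = Msigma m e i := fun _ => rfl
  simpa only [map_mul, map_pow, hof] using And.intro (key _ (.inl rfl)) <|
    And.intro (key _ (.inr <| .inl rfl)) <| And.intro (key _ (.inr <| .inr <| .inl rfl)) <|
    And.intro (key _ (.inr <| .inr <| .inr <| .inl rfl)) <|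
    And.intro (key _ (.inr <| .inr <| .inr <| .inr <| .inl rfl)) <|
    And.intro (key _ (.inr <| .inr <| .inr <| .inr <| .inr <| .inl rfl))
      (key _ (.inr <| .inr <| .inr <| .inr <| .inr <| .inr rfl))

lemma exists_Mgrp_hom {G : Type*} [Group G] (x y z : G) (h0 : x ^ 2 = 1) (h1 : y ^ 2 = 1)
    (h2 : z ^ 2 = 1) (h01 : (x * y) ^ 4 = 1) (h02 : (x * z) ^ 2 = 1)
    (h12 : (y * z) ^ (2 ^ (m - 3)) = 1)
    (h : (x * y * z * y) ^ 2 * (z * y) ^ (2 ^ (m - 4) * e) = 1) :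
    ∃ φ : Mgrp m e →* G, φ (Msigma m e 0) = x ∧ φ (Msigma m e 1) = y ∧ φ (Msigma m e 2) = z := by
  have key : ∀ r ∈ Mrels m e, FreeGroup.lift ![x, y, z] r = 1 := by
    simp only [Mrels, Set.mem_insert_iff, Set.mem_singleton_iff, forall_eq_or_imp, forall_eq,
      map_mul, map_pow, FreeGroup.lift_apply_of]
    exact ⟨h0, h1, h2, h01, h02, h12, h⟩
  exact ⟨PresentedGroup.toGroup key, PresentedGroup.toGroup.of key, PresentedGroup.toGroup.of key,
    PresentedGroup.toGroup.of key⟩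

lemma exists_hom_sign (hm : 7 ≤ m) : ∃ φ : Mgrp m e →* ℤˣ, φ (Msigma m e 0) = 1 ∧ φ (Msigma m e 1) = -1 ∧
    φ (Msigma m e 2) = 1 := by
  obtain ⟨p, rfl⟩ : ∃ p, m = p + 7 := ⟨m - 7, by omega⟩
  have e3 : 2 ^ (p + 7 - 3) = 2 * 2 ^ (p + 3) := by rw [← pow_succ']; congr 1
  have e4 : 2 ^ (p + 7 - 4) * e = 2 * (2 ^ (p + 2) * e) := by
    rw [← mul_assoc, ← pow_succ']; congr 2
  refine exists_Mgrp_hom (p + 7) e 1 (-1) 1 ?_ ?_ ?_ ?_ ?_ ?_ ?_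
  · simp
  · simp
  · simp
  · simp [pow_succ]
  · simp
  · rw [e3, pow_mul]; simp
  · rw [e4, pow_mul (1 * -1)]; simp

lemma exists_hom_dihedral_four (hm : 7 ≤ m) :
    ∃ φ : Mgrp m e →* DihedralGroup 4, φ (Msigma m e 0) = .sr 0 ∧ φ (Msigma m e 1) = .sr 1 ∧
      φ (Msigma m e 2) = 1 := by
  obtain ⟨p, rfl⟩ : ∃ p, m = p + 7 := ⟨m - 7, by omega⟩
  have e3 : 2 ^ (p + 7 - 3) = 2 * 2 ^ (p + 3) := by rw [← pow_succ']; congr 1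
  have e4 : 2 ^ (p + 7 - 4) * e = 2 * (2 ^ (p + 2) * e) := by
    rw [← mul_assoc, ← pow_succ']; congr 2
  have h1 : (DihedralGroup.sr 1 : DihedralGroup 4) ^ 2 = 1 := by decide
  refine exists_Mgrp_hom (G := DihedralGroup 4) (p + 7) e (.sr 0) (.sr 1) 1 ?_ h1 ?_ ?_ ?_ ?_ ?_
  · decide
  · decide
  · decide
  · decide
  · rw [e3, mul_one, pow_mul, h1, one_pow]
  · rw [e4, one_mul, pow_mul (DihedralGroup.sr 1), h1, one_pow]
    decide

end Relations

/-! ### The action of `M(m, e)` on the dihedral group -/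

namespace DihedralAction

open DihedralGroup

variable {n : ℕ}

/-- Left translation by the reflection `sr 0`, the permutation by which `σ₂` acts. -/
def translate : Equiv.Perm (DihedralGroup n) :=
  Function.Involutive.toPerm (fun x : DihedralGroup n => match x with | r i => sr i | sr i => r i)
    (by rintro (i | i) <;> rfl)

/-- The automorphism exchanging the reflections `sr 0` and `sr 1`, by which `σ₁` acts. -/
def swap : Equiv.Perm (DihedralGroup n) :=
  Function.Involutive.toPerm (fun x : DihedralGroup n => match x with | r i => r (-i) | sr i => sr (1 - i))
    (by rintro (i | i) <;> simp)

/-- The automorphism fixing `sr 0` and multiplying exponents by an involutory unit `u`, by which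
`σ₀` acts. -/
def scale (u : ZMod n) (hu : u * u = 1) : Equiv.Perm (DihedralGroup n) :=
  Function.Involutive.toPerm (fun x : DihedralGroup n => match x with | r i => r (u * i) | sr i => sr (u * i))
    (by rintro (i | i) <;> simp [← mul_assoc, hu])

@[simp] lemma translate_r (i : ZMod n) : translate (r i) = sr i := rfl
@[simp] lemma translate_sr (i : ZMod n) : translate (sr i) = r i := rfl
@[simp] lemma swap_r (i : ZMod n) : swap (r i) = r (-i) := rfl
@[simp] lemma swap_sr (i : ZMod n) : swap (sr i) = sr (1 - i) := rfl
@[simp] lemma scale_r (u : ZMod n) (hu) (i : ZMod n) : scale u hu (r i) = r (u * i) := rfl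
@[simp] lemma scale_sr (u : ZMod n) (hu) (i : ZMod n) : scale u hu (sr i) = sr (u * i) := rfl

/-- `(translate * swap) ^ 2` is left translation by `r 1`. -/
lemma translate_swap_pow (k : ℕ) :
    (∀ i : ZMod n, ((translate * swap : Equiv.Perm (DihedralGroup n)) ^ (2 * k)) (r i) = r (i + (k : ZMod n))) ∧
    (∀ i : ZMod n, ((translate * swap : Equiv.Perm (DihedralGroup n)) ^ (2 * k)) (sr i) = sr (i - (k : ZMod n))) := by
  induction k with
  | zero => simp
  | succ k ih =>
    constructor <;> intro i <;> rw [mul_add, pow_add, Equiv.Perm.mul_apply] <;>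
      simp [pow_two, ih.1, ih.2] <;> ring

lemma swap_translate_pow (k : ℕ) :
    (∀ i : ZMod n, ((swap * translate : Equiv.Perm (DihedralGroup n)) ^ (2 * k)) (r i) = r (i - (k : ZMod n))) ∧
    (∀ i : ZMod n, ((swap * translate : Equiv.Perm (DihedralGroup n)) ^ (2 * k)) (sr i) = sr (i + (k : ZMod n))) := by
  induction k with
  | zero => simp
  | succ k ih =>
    constructor <;> intro i <;> rw [mul_add, pow_add, Equiv.Perm.mul_apply] <;>
      simp [pow_two, ih.1, ih.2] <;> ring

end DihedralAction

open DihedralAction in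
/-- The scaling factor is `u = 1 + e n / 2`; the relation `(ad)² (cd) ^ (e n / 2) = 1` forces it, and
`u² = 1` in `ZMod n` because `n` is divisible by `4`. -/
lemma exists_hom_perm (m e : ℕ) (hm : 7 ≤ m) :
    ∃ φ : Mgrp m e →* Equiv.Perm (DihedralGroup (2 ^ (m - 4))),
      φ (Msigma m e 1) = swap ∧ φ (Msigma m e 2) = translate := by
  obtain ⟨p, rfl⟩ : ∃ p, m = p + 7 := ⟨m - 7, by omega⟩
  have e3 : p + 7 - 3 = p + 4 := by omega
  have e4 : p + 7 - 4 = p + 3 := by omega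
  rw [e4]
  set n := 2 ^ (p + 3) with hn
  set h : ZMod n := ((2 ^ (p + 2) * e : ℕ) : ZMod n) with hh
  have hadd : h + h = 0 := by
    rw [hh, ← Nat.cast_add, ZMod.natCast_eq_zero_iff]
    exact ⟨e, by rw [hn]; ring⟩
  have hmul : h * h = 0 := by
    rw [hh, ← Nat.cast_mul, ZMod.natCast_eq_zero_iff]
    exact ⟨2 ^ (p + 1) * e * e, by rw [hn]; ring⟩
  have hu : (1 + h) * (1 + h) = 1 := by linear_combination hmul + hadd
  obtain ⟨φ, -, h1, h2⟩ := exists_Mgrp_hom (p + 7) e (scale (1 + h) hu) swap translate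
    (by ext (i | i) <;> simp [pow_two, ← mul_assoc, hu])
    (by ext (i | i) <;> simp [pow_two])
    (by ext (i | i) <;> simp [pow_two])
    (by
      ext (i | i) <;> simp [pow_succ]
      · linear_combination (i * ((1 + h) * (1 + h) + 1)) * hu
      · linear_combination (i * ((1 + h) * (1 + h) + 1) - h - 1) * hu - (1 + 2 * h + h * h) * hmul)
    (by ext (i | i) <;> simp [pow_two, ← mul_assoc, hu])
    (by
      have : 2 ^ (p + 7 - 3) = 2 * n := by rw [e3, hn]; ring
      rw [this]
      ext (i | i) <;> simp [swap_translate_pow])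
    (by
      have : 2 ^ (p + 7 - 4) * e = 2 * (2 ^ (p + 2) * e) := by rw [e4]; ring
      rw [this]
      ext (i | i) <;> simp only [Equiv.Perm.mul_apply, translate_swap_pow, pow_two, ← hh] <;> simp
      · linear_combination (i + h) * hu + hadd + hmul
      · linear_combination (i + h) * hu - hadd - (5 + 2 * h) * hmul)
  exact ⟨φ, h1, h2⟩

/-! ### Dihedral subgroups generated by two involutions -/

section DihedralHom

variable {G : Type*} [Group G]

open DihedralGroup in
/-- Two involutions `c, d` with `(cd) ^ n = 1` determine a homomorphism from `DihedralGroup n`, taking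
the rotation `r k` to `(cd) ^ k`, with image `⟨c, d⟩`. -/
lemma exists_dihedral_hom (n : ℕ) (c d : G) (hc : c * c = 1) (hd : d * d = 1)
    (hcd : (c * d) ^ n = 1) :
    ∃ f : DihedralGroup n →* G, f.range = Subgroup.closure {c, d} ∧
      (∀ k : ℕ, f (r k) = (c * d) ^ k) ∧ (∀ k : ℕ, f (sr k) = c * (c * d) ^ k) := by
  let g : ZMod n →+ Additive G := ZMod.lift n ⟨zmultiplesHom _ (Additive.ofMul (c * d)), by
    rw [zmultiplesHom_apply, natCast_zsmul, ← ofMul_pow, hcd, ofMul_one]⟩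
  let R : ZMod n → G := fun i => (g i).toMul
  have hci : c⁻¹ = c := inv_eq_of_mul_eq_one_left hc
  have hdi : d⁻¹ = d := inv_eq_of_mul_eq_one_left hd
  have hRadd : ∀ i j, R (i + j) = R i * R j := fun i j => by simp [R]
  have hRz : ∀ k : ℤ, R k = (c * d) ^ k := fun k => by simp [R, g]
  have hRn : ∀ k : ℕ, R k = (c * d) ^ k := fun k => by simpa using hRz k
  have hR0 : R 0 = 1 := by simp [R]
  have hconj : ∀ i, R i * c = c * R (-i) := by
    intro i
    obtain ⟨k, rfl⟩ := ZMod.intCast_surjective i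
    have h1 : c * (c * d)⁻¹ * c⁻¹ = c * d := by
      simp only [mul_inv_rev, hci, hdi, mul_assoc, hc, mul_one]
    rw [← Int.cast_neg, hRz, hRz, zpow_neg, ← inv_zpow]
    conv_lhs => rw [← h1, conj_zpow]
    rw [inv_mul_cancel_right]
  let f : DihedralGroup n →* G := MonoidHom.mk' (fun x : DihedralGroup n => match x with
      | r i => R i
      | sr i => c * R i) (by
    rintro (i | i) (j | j)
    · exact hRadd i j
    · change c * R (j - i) = R i * (c * R j)
      rw [← mul_assoc, hconj, mul_assoc, ← hRadd]; congr 2; ring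
    · change c * R (i + j) = c * R i * R j
      rw [hRadd, mul_assoc]
    · change R (j - i) = c * R i * (c * R j)
      rw [mul_assoc, ← mul_assoc (R i), hconj, mul_assoc, ← mul_assoc, hc, one_mul, ← hRadd]
      congr 1; ring)
  have hfr : ∀ i, f (r i) = R i := fun _ => rfl
  have hfs : ∀ i, f (sr i) = c * R i := fun _ => rfl
  refine ⟨f, le_antisymm ?_ ?_, fun k => by rw [hfr, hRn], fun k => by rw [hfs, hRn]⟩
  · have hcm : c ∈ Subgroup.closure {c, d} := Subgroup.subset_closure (by simp)
    have hdm : d ∈ Subgroup.closure {c, d} := Subgroup.subset_closure (by simp)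
    have hRm : ∀ i, R i ∈ Subgroup.closure {c, d} := by
      intro i
      obtain ⟨k, rfl⟩ := ZMod.intCast_surjective i
      rw [hRz]
      exact zpow_mem (mul_mem hcm hdm) k
    rintro _ ⟨i | i, rfl⟩
    · exact hRm i
    · exact mul_mem hcm (hRm i)
  · rw [Subgroup.closure_le]
    rintro x (rfl | rfl)
    · exact ⟨sr 0, by rw [hfs, hR0, mul_one]⟩
    · refine ⟨sr 1, ?_⟩
      have := hRn 1
      rw [Nat.cast_one, pow_one] at this
      rw [hfs, this, ← mul_assoc, hc, one_mul]

/-- Neither `a` nor `b` is required to be nontrivial, so that the lemma also covers `⟨t⟩ = ⟨1, t⟩`. -/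
lemma mem_closure_pair_involutions {a b x : G} (ha : a * a = 1) (hb : b * b = 1)
    (hab : a * b = b * a) (hx : x ∈ Subgroup.closure {a, b}) :
    x = 1 ∨ x = a ∨ x = b ∨ x = a * b := by
  have haa : ∀ y, a * (a * y) = y := fun y => by rw [← mul_assoc, ha, one_mul]
  have hba : ∀ y, b * (a * y) = a * (b * y) := fun y => by rw [← mul_assoc, ← hab, mul_assoc]
  have hai : a⁻¹ = a := inv_eq_of_mul_eq_one_left ha
  have hbi : b⁻¹ = b := inv_eq_of_mul_eq_one_left hb
  induction hx using Subgroup.closure_induction with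
  | mem x hx => rcases hx with rfl | rfl <;> simp
  | one => simp
  | mul x y _ _ hx hy =>
    rcases hx with h | h | h | h <;> rcases hy with h' | h' | h' | h' <;>
      simp [h, h', ha, hb, mul_assoc, haa, hba, ← hab]
  | inv x _ hx => rcases hx with h | h | h | h <;> simp [h, hai, hbi, hab]

end DihedralHom

/-! ### The subgroups `H₀` and `H₂` -/

/-- For m ≥ 7 and e ∈ {0, 1}, with H₀ = ⟨σ₀, σ₁σ₀σ₁⟩ and
H₂ = ⟨σ₂, σ₁σ₂σ₁⟩ in M(m, e): H₀ is Klein four, H₂ is dihedral of order 2^(m-3),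
H₀ ⊓ H₂ = ⊥, |H₀ ⊔ H₂| = 2^(m-1), and (H₀ ⊔ H₂) ⊓ ⟨σ₁⟩ = ⊥. -/
theorem stmt_14 (m e : ℕ) (hm : 7 ≤ m) (he : e ≤ 1) :
    let H₀ : Subgroup (Mgrp m e) := Subgroup.closure
      {Msigma m e 0, Msigma m e 1 * Msigma m e 0 * Msigma m e 1}
    let H₂ : Subgroup (Mgrp m e) := Subgroup.closure
      {Msigma m e 2, Msigma m e 1 * Msigma m e 2 * Msigma m e 1}
    Nonempty (H₀ ≃* Multiplicative (ZMod 2 × ZMod 2)) ∧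
    Nonempty (H₂ ≃* DihedralGroup (2 ^ (m - 4))) ∧
    H₀ ⊓ H₂ = ⊥ ∧
    Nat.card (H₀ ⊔ H₂ : Subgroup (Mgrp m e)) = 2 ^ (m - 1) ∧
    (H₀ ⊔ H₂) ⊓ Subgroup.closure {Msigma m e 1} = ⊥ := by
  intro H₀ H₂
  obtain ⟨r0, r1, r2, r01, r02, r12, rlast⟩ := Msigma_rels m e
  obtain ⟨χ, χ0, χ1, χ2⟩ := exists_hom_dihedral_four m e hm
  obtain ⟨ρ, ρ1, ρ2⟩ := exists_hom_perm m e hm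
  obtain ⟨ψ, ψ0, ψ1, ψ2⟩ := exists_hom_sign m e hm
  have htop : Subgroup.closure {Msigma m e 0, Msigma m e 1, Msigma m e 2} = ⊤ := by
    rw [← PresentedGroup.closure_range_of (Mrels m e)]
    congr 1
    ext x
    simp [Msigma, Fin.exists_fin_succ, eq_comm]
  set s := Msigma m e 0
  set t := Msigma m e 1
  set c := Msigma m e 2
  have e3 : 2 ^ (m - 3) = 2 * 2 ^ (m - 4) := by
    rw [← pow_succ']; congr 1; omega
  have e4 : 2 ^ (m - 4) * e = 2 * (2 ^ (m - 5) * e) := by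
    rw [← mul_assoc, ← pow_succ']; congr 2; omega
  rw [pow_two] at r0 r1 r2
  have is : s⁻¹ = s := inv_eq_of_mul_eq_one_left r0
  have it : t⁻¹ = t := inv_eq_of_mul_eq_one_left r1
  have ic : c⁻¹ = c := inv_eq_of_mul_eq_one_left r2
  have tt : ∀ x, t * (t * x) = x := fun x => by rw [← mul_assoc, r1, one_mul]
  have ss : ∀ x, s * (s * x) = x := fun x => by rw [← mul_assoc, r0, one_mul]
  have cc : ∀ x, c * (c * x) = x := fun x => by rw [← mul_assoc, r2, one_mul]
  set b := t * s * t with hb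
  set d := t * c * t with hd
  have hbb : b * b = 1 := by simp [hb, mul_assoc, tt, ss, r1]
  have hdd : d * d = 1 := by simp [hd, mul_assoc, tt, cc, r1]
  have hab : s * b = b * s := by
    rw [← mul_inv_eq_one, ← r01]
    simp [hb, mul_assoc, is, it, pow_succ]
  have hsc : s * c * s = c := by
    rw [← mul_inv_eq_one, ← r02]
    simp [mul_assoc, ic, pow_succ]
  have hct : (c * t) ^ 2 = c * d := by simp [hd, pow_two, mul_assoc]
  have hcd : (c * d) ^ 2 ^ (m - 4) = 1 := by
    rw [← hct, ← pow_mul, ← e3, ← inv_eq_one, ← inv_pow, mul_inv_rev, it, ic, r12]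
  -- `H₂` is the faithful image of the dihedral group
  obtain ⟨f, hfrange, hfr, hfs⟩ := exists_dihedral_hom (2 ^ (m - 4)) c d r2 hdd hcd
  have hinj : Function.Injective f := by
    have hR : ∀ k : ℕ, ρ ((c * d) ^ k) (.r 0) = .r k := by
      intro k
      rw [← hct, ← pow_mul, map_pow, map_mul, ρ1, ρ2, (DihedralAction.translate_swap_pow k).1,
        zero_add]
    have hev : ∀ x, ρ (f x) (.r 0) = x := by
      have : NeZero (2 ^ (m - 4)) := ⟨by positivity⟩
      rintro (i | i)
      · obtain ⟨k, rfl⟩ := ZMod.natCast_zmod_surjective i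
        rw [hfr, hR]
      · obtain ⟨k, rfl⟩ := ZMod.natCast_zmod_surjective i
        rw [hfs, map_mul, Equiv.Perm.mul_apply, hR, ρ2, DihedralAction.translate_r]
    exact Function.LeftInverse.injective (g := fun x => ρ x (.r 0)) hev
  have equiv2 : DihedralGroup (2 ^ (m - 4)) ≃* H₂ :=
    (MonoidHom.ofInjective hinj).trans (MulEquiv.subgroupCongr hfrange)
  have card2 : Nat.card H₂ = 2 * 2 ^ (m - 4) := by
    rw [← Nat.card_congr equiv2.toEquiv, DihedralGroup.nat_card]
  have hcm : c ∈ H₂ := Subgroup.subset_closure (Set.mem_insert _ _)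
  have hdm : d ∈ H₂ := Subgroup.subset_closure (Set.mem_insert_of_mem _ rfl)
  have hsd : s * d * s ∈ H₂ := by
    have h1 : (s * d) ^ 2 * (c * d) ^ (2 ^ (m - 5) * e) = 1 := by
      rw [← rlast, e4, pow_mul (c * t), hct]
      simp [hd, mul_assoc]
    have h2 : s * d * s = ((c * d) ^ (2 ^ (m - 5) * e))⁻¹ * d := by
      rw [← eq_inv_of_mul_eq_one_left h1, pow_two]
      simp only [mul_assoc, hdd, mul_one]
    rw [h2]
    exact mul_mem (inv_mem (pow_mem (mul_mem hcm hdm) _)) hdm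
  have hnormal : H₂.Normal := by
    have hmem : ∀ g : Mgrp m e, g⁻¹ = g → g * c * g ∈ H₂ → g * d * g ∈ H₂ →
        g ∈ Subgroup.normalizer (H₂ : Set (Mgrp m e)) := by
      intro g hg h1 h2
      have hle : ∀ h ∈ H₂, g * h * g⁻¹ ∈ H₂ := by
        have : H₂ ≤ H₂.comap (MulAut.conj g).toMonoidHom := by
          rw [Subgroup.closure_le]
          rintro x (rfl | rfl)
          · simpa [hg] using h1
          · simpa [hg] using h2
        exact fun h hh => this hh
      rw [Subgroup.mem_normalizer_iff]
      refine fun h => ⟨hle h, fun hh => ?_⟩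
      simpa [hg, mul_assoc, mul_eq_one_iff_inv_eq.2 hg, ← mul_assoc g g] using hle _ hh
    rw [← Subgroup.normalizer_eq_top_iff, ← top_le_iff, ← htop, Subgroup.closure_le]
    rintro x (rfl | rfl | rfl)
    · exact hmem _ is (hsc.symm ▸ hcm) hsd
    · refine hmem _ it hdm ?_
      have : t * d * t = c := by simp [hd, mul_assoc, tt, r1]
      rwa [this]
    · exact hmem _ ic (mul_mem (mul_mem hcm hcm) hcm) (mul_mem (mul_mem hcm hdm) hcm)
  -- `H₀` is a Klein four-group, its elements being separated by their images in `DihedralGroup 4`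
  have χb : χ b = .sr 2 := by
    rw [hb, map_mul, map_mul, χ0, χ1]; decide
  have χsb : χ (s * b) = .r 2 := by
    rw [map_mul, χ0, χb]; decide
  have hH0 : ∀ x ∈ H₀, x = 1 ∨ x = s ∨ x = b ∨ x = s * b := fun x hx =>
    mem_closure_pair_involutions r0 hbb hab hx
  have hsm : s ∈ H₀ := Subgroup.subset_closure (Set.mem_insert _ _)
  have hbm : b ∈ H₀ := Subgroup.subset_closure (Set.mem_insert_of_mem _ rfl)
  have hχ : ∀ x ∈ H₀, χ x = 1 → x = 1 := by
    intro x hx h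
    rcases hH0 x hx with rfl | rfl | rfl | rfl
    · rfl
    · rw [χ0] at h; exact absurd h (by decide)
    · rw [χb] at h; exact absurd h (by decide)
    · rw [χsb] at h; exact absurd h (by decide)
  have hcoe : (H₀ : Set (Mgrp m e)) = {1, s, b, s * b} := by
    ext x
    refine ⟨fun hx => by simpa using hH0 x hx, ?_⟩
    rintro (rfl | rfl | rfl | rfl)
    exacts [one_mem _, hsm, hbm, mul_mem hsm hbm]
  have card0 : Nat.card H₀ = 4 := by
    have hne : ∀ {x y}, χ x ≠ χ y → x ≠ y := fun h h' => h (h' ▸ rfl)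
    change Nat.card (H₀ : Set (Mgrp m e)) = 4
    rw [hcoe, Nat.card_coe_set_eq, Set.ncard_insert_of_notMem, Set.ncard_insert_of_notMem,
      Set.ncard_pair]
    · refine hne ?_
      rw [χb, χsb]; decide
    · rintro (h | h) <;> refine hne ?_ h
      · rw [χ0, χb]; decide
      · rw [χ0, χsb]; decide
    · rintro (h | h | h) <;> refine hne ?_ h
      · rw [map_one, χ0]; decide
      · rw [map_one, χb]; decide
      · rw [map_one, χsb]; decide
  have klein : IsKleinFour H₀ := by
    have : Finite H₀ := Nat.finite_of_card_ne_zero (by omega)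
    have : Nontrivial H₀ := Finite.one_lt_card_iff_nontrivial.1 (by omega)
    refine ⟨card0, Monoid.exponent_eq_prime_iff Nat.prime_two |>.2 fun x hx =>
      orderOf_eq_prime ?_ hx⟩
    ext
    rcases hH0 x x.2 with h | h | h | h <;> simp [h, pow_two, r0, hbb]
    rw [mul_assoc, ← mul_assoc b, ← hab, mul_assoc, hbb, mul_one, r0]
  have hdisj : H₀ ⊓ H₂ = ⊥ := by
    have hker : H₂ ≤ χ.ker := by
      rw [Subgroup.closure_le]
      rintro x (rfl | rfl)
      · exact χ2
      · change χ d = 1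
        rw [hd, map_mul, map_mul, χ1, χ2]; decide
    rw [eq_bot_iff]
    rintro x ⟨hx0, hx2⟩
    exact hχ x hx0 (hker hx2)
  refine ⟨IsKleinFour.nonempty_mulEquiv, ⟨equiv2.symm⟩, hdisj, ?_, ?_⟩
  · rw [← Subgroup.relIndex_bot_left,
      ← Subgroup.relIndex_mul_relIndex ⊥ H₂ (H₀ ⊔ H₂) bot_le le_sup_right,
      Subgroup.relIndex_sup_right, Subgroup.relIndex_bot_left, ← Subgroup.inf_relIndex_left,
      hdisj, Subgroup.relIndex_bot_left, card0, card2]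
    obtain ⟨p, rfl⟩ : ∃ p, m = p + 4 := ⟨m - 4, by omega⟩
    simp [pow_succ]
    ring
  · have hker : H₀ ⊔ H₂ ≤ ψ.ker := by
      refine sup_le ?_ ?_ <;> rw [Subgroup.closure_le] <;> rintro x (rfl | rfl)
      · exact ψ0
      · change ψ b = 1
        simp [hb, ψ0, ψ1]
      · exact ψ2
      · change ψ d = 1
        simp [hd, ψ2, ψ1]
    rw [eq_bot_iff]
    rintro x ⟨hx, hx1⟩
    have hx' : x = 1 ∨ x = t := by
      simpa using mem_closure_pair_involutions (mul_one 1) r1 (by simp)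
        (show x ∈ Subgroup.closure {1, t} from Subgroup.closure_mono (by simp) hx1)
    rcases hx' with rfl | rfl
    · exact one_mem _
    · have := hker hx
      rw [MonoidHom.mem_ker, ψ1] at this
      exact absurd this (by decide)
end

section
/- Let G be a group and let s₀, s₁, s₂ ∈ G be involutions (each sᵢ ≠ 1 and sᵢ² = 1) forming a connected string diagram: s₀ commutes with s₂, while s₁ does not commute with s₀ and s₁ does not commute with s₂. Suppose ζ is a central involution of G (ζ ∈ center, ζ² = 1, ζ ≠ 1) and there exist integers x₁, x₂ with (s₀s₁)^(2x₁) = ζ and (s₁s₂)^(2x₂) = ζ. Then Subgroup.closure {s₁} is a proper subgroup of Subgroup.closure {s₀, s₁} ⊓ Subgroup.closure {s₁, s₂}; in particular the intersection condition Subgroup.closure {s₀, s₁} ⊓ Subgroup.closure {s₁, s₂} = Subgroup.closure {s₁} fails. -/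
/-! The central involution `ζ` is a power of both `s₀ * s₁` and `s₁ * s₂`, so it lies in the
intersection. It is not in `⟨s₁⟩ = {1, s₁}`: `ζ ≠ 1`, and `ζ = s₁` would make `s₁` central, whereas
`s₁` does not commute with `s₀`. -/

/-- If s₀, s₁, s₂ are involutions with a connected string diagram
(s₀ commutes with s₂, s₁ commutes with neither s₀ nor s₂), ζ is a central
involution, and (s₀s₁)^(2x₁) = ζ = (s₁s₂)^(2x₂) for some integers x₁, x₂, then
⟨s₁⟩ < ⟨s₀, s₁⟩ ⊓ ⟨s₁, s₂⟩; in particular the intersection condition fails. -/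
theorem stmt_15 {G : Type*} [Group G] (s₀ s₁ s₂ ζ : G)
    (h₀ : s₀ ≠ 1) (h₀sq : s₀ ^ 2 = 1)
    (h₁ : s₁ ≠ 1) (h₁sq : s₁ ^ 2 = 1)
    (h₂ : s₂ ≠ 1) (h₂sq : s₂ ^ 2 = 1)
    (hc02 : Commute s₀ s₂) (hnc01 : ¬ Commute s₀ s₁) (hnc12 : ¬ Commute s₁ s₂)
    (hζc : ζ ∈ Subgroup.center G) (hζsq : ζ ^ 2 = 1) (hζ1 : ζ ≠ 1)
    (x₁ x₂ : ℤ) (hx₁ : (s₀ * s₁) ^ (2 * x₁) = ζ) (hx₂ : (s₁ * s₂) ^ (2 * x₂) = ζ) :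
    Subgroup.closure {s₁} <
        Subgroup.closure {s₀, s₁} ⊓ Subgroup.closure {s₁, s₂} ∧
      Subgroup.closure {s₀, s₁} ⊓ Subgroup.closure {s₁, s₂} ≠
        Subgroup.closure {s₁} := by
  have hζ : ζ ∈ Subgroup.closure {s₀, s₁} ⊓ Subgroup.closure {s₁, s₂} := by
    constructor
    · rw [← hx₁]
      exact zpow_mem (mul_mem (Subgroup.subset_closure (by simp))
        (Subgroup.subset_closure (by simp))) _
    · rw [← hx₂]
      exact zpow_mem (mul_mem (Subgroup.subset_closure (by simp))
        (Subgroup.subset_closure (by simp))) _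
  have hζ' : ζ ∉ Subgroup.closure {s₁} := by
    rw [Subgroup.mem_closure_singleton]
    rintro ⟨n, hn⟩
    have hsq : s₁ ^ (2 : ℤ) = 1 := by exact_mod_cast h₁sq
    obtain ⟨k, rfl | rfl⟩ := Int.even_or_odd' n
    · rw [zpow_mul, hsq, one_zpow] at hn
      exact hζ1 hn.symm
    · rw [zpow_add, zpow_mul, hsq, one_zpow, one_mul, zpow_one] at hn
      rw [hn] at hnc01
      exact hnc01 (Subgroup.mem_center_iff.mp hζc s₀)
  have hle : Subgroup.closure {s₁} ≤
      Subgroup.closure {s₀, s₁} ⊓ Subgroup.closure {s₁, s₂} :=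
    le_inf (Subgroup.closure_mono (by simp)) (Subgroup.closure_mono (by simp))
  have hlt := lt_of_le_not_ge hle fun h => hζ' (h hζ)
  exact ⟨hlt, hlt.ne'⟩
end

section
/- Let G be a group and let s₀, s₁, s₂ ∈ G be involutions (each sᵢ ≠ 1 and sᵢ² = 1) forming a connected string diagram: s₀ commutes with s₂, while s₁ does not commute with s₀ and s₁ does not commute with s₂. If s₀s₁s₀ = s₂s₁s₂ (i.e. the conjugates s₁^{s₀} and s₁^{s₂} coincide), then Subgroup.closure {s₁} is a proper subgroup of Subgroup.closure {s₀, s₁} ⊓ Subgroup.closure {s₁, s₂}; in particular the intersection condition Subgroup.closure {s₀, s₁} ⊓ Subgroup.closure {s₁, s₂} = Subgroup.closure {s₁} fails. -/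
/-!
The element `x = s₀s₁s₀ = s₂s₁s₂` lies in both `⟨s₀, s₁⟩` and `⟨s₁, s₂⟩`. As `s₁` is an involution,
`⟨s₁⟩ = {1, s₁}`. If `x = 1` then its conjugate `s₁` is trivial, and if `x = s₁` then `s₀` commutes
with `s₁`; both are excluded, so `x ∉ ⟨s₁⟩` and the inclusion is strict.
-/

/-- If s₀, s₁, s₂ are involutions with a connected string diagram
(s₀ commutes with s₂, s₁ commutes with neither s₀ nor s₂) and
s₀s₁s₀ = s₂s₁s₂, then ⟨s₁⟩ < ⟨s₀, s₁⟩ ⊓ ⟨s₁, s₂⟩; in particular the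
intersection condition fails. -/
theorem stmt_16 {G : Type*} [Group G] (s₀ s₁ s₂ : G)
    (h₀ : s₀ ≠ 1) (h₀sq : s₀ ^ 2 = 1)
    (h₁ : s₁ ≠ 1) (h₁sq : s₁ ^ 2 = 1)
    (h₂ : s₂ ≠ 1) (h₂sq : s₂ ^ 2 = 1)
    (hc02 : Commute s₀ s₂) (hnc01 : ¬ Commute s₀ s₁) (hnc12 : ¬ Commute s₁ s₂)
    (hconj : s₀ * s₁ * s₀ = s₂ * s₁ * s₂) :
    Subgroup.closure {s₁} <
        Subgroup.closure {s₀, s₁} ⊓ Subgroup.closure {s₁, s₂} ∧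
      Subgroup.closure {s₀, s₁} ⊓ Subgroup.closure {s₁, s₂} ≠
        Subgroup.closure {s₁} := by
  have key : Subgroup.closure {s₁} <
      Subgroup.closure {s₀, s₁} ⊓ Subgroup.closure {s₁, s₂} := by
    have m₀ : s₀ ∈ Subgroup.closure {s₀, s₁} := Subgroup.subset_closure (by simp)
    have m₁ : s₁ ∈ Subgroup.closure {s₀, s₁} := Subgroup.subset_closure (by simp)
    have m₁' : s₁ ∈ Subgroup.closure {s₁, s₂} := Subgroup.subset_closure (by simp)
    have m₂ : s₂ ∈ Subgroup.closure {s₁, s₂} := Subgroup.subset_closure (by simp)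
    have hinv : s₀ * s₀ = 1 := by rw [← pow_two, h₀sq]
    rw [SetLike.lt_iff_le_and_exists]
    -- The common conjugate `s₀ * s₁ * s₀ = s₂ * s₁ * s₂` lies in the intersection but not in `⟨s₁⟩`.
    refine ⟨?_, s₀ * s₁ * s₀, ⟨mul_mem (mul_mem m₀ m₁) m₀, ?_⟩, ?_⟩
    · rw [Subgroup.closure_le, Set.singleton_subset_iff]
      exact ⟨m₁, m₁'⟩
    · rw [hconj]
      exact mul_mem (mul_mem m₂ m₁') m₂
    · intro hx
      obtain ⟨n, hn⟩ := Subgroup.mem_closure_singleton.mp hx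
      -- `⟨s₁⟩ = {1, s₁}`: the parity of the exponent decides which element occurs.
      obtain ⟨k, rfl | rfl⟩ := n.even_or_odd'
      · rw [zpow_mul, zpow_ofNat, h₁sq, one_zpow] at hn
        apply h₁
        calc s₁ = (s₀ * s₀) * s₁ * (s₀ * s₀) := by simp [hinv]
          _ = s₀ * (s₀ * s₁ * s₀) * s₀ := by simp only [mul_assoc]
          _ = 1 := by rw [← hn, mul_one, hinv]
      · rw [zpow_add, zpow_mul, zpow_ofNat, h₁sq, one_zpow, one_mul, zpow_one] at hn
        apply hnc01
        calc s₀ * s₁ = s₀ * s₁ * (s₀ * s₀) := by rw [hinv, mul_one]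
          _ = (s₀ * s₁ * s₀) * s₀ := by simp only [mul_assoc]
          _ = s₁ * s₀ := by rw [← hn]
  exact ⟨key, key.ne'⟩
end

section
/- For m ≥ 6, let N₃(m) be the presented group on generators p, q, r with relations p^(2^(m−2)) = 1, q² = 1, r² = 1, q⁻¹pq = p, r⁻¹pr = p⁻¹, r⁻¹qr = q·p^(2^(m−3)) (the group 𝒩_{II,3}(m), of order 2^m and exponent 2^(m−2)). Then for every pair of non-commuting involutions t₀, t₁ ∈ N₃(m) (t₀² = t₁² = 1, t₀ ≠ 1, t₁ ≠ 1, t₀t₁ ≠ t₁t₀) there exists an integer x such that (t₀t₁)^(2x) = p̄^(2^(m−3)), where p̄ denotes the image of p in N₃(m). In particular, N₃(m) is not a connected string C-group. -/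
/-- The relation set of the presented group 𝒩_{II,3}(m) on generators p, q, r:
p^(2^(m-2)) = 1, q² = 1, r² = 1, q⁻¹pq = p, r⁻¹pr = p⁻¹,
r⁻¹qr = q·p^(2^(m-3)). -/
def N3rels (m : ℕ) : Set (FreeGroup (Fin 3)) :=
  {(FreeGroup.of 0) ^ (2 ^ (m - 2)), (FreeGroup.of 1) ^ 2, (FreeGroup.of 2) ^ 2,
    (FreeGroup.of 1)⁻¹ * FreeGroup.of 0 * FreeGroup.of 1 * (FreeGroup.of 0)⁻¹,
    (FreeGroup.of 2)⁻¹ * FreeGroup.of 0 * FreeGroup.of 2 * FreeGroup.of 0,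
    (FreeGroup.of 2)⁻¹ * FreeGroup.of 1 * FreeGroup.of 2 *
      (FreeGroup.of 1 * (FreeGroup.of 0) ^ (2 ^ (m - 3)))⁻¹}

/-- The presented group 𝒩_{II,3}(m). -/
abbrev N3grp (m : ℕ) : Type := PresentedGroup (N3rels m)

/-! ### Groups satisfying the relations -/

section Abstract

variable {G : Type*} [Group G] {p q r z : G} {N : ℕ}

/-- The relations of `N3grp`, with `N` in place of `2^(m-3)`, `z` for `p^N`, and the conjugation
relations rewritten as rules moving `p` to the left and `r` to the right. -/
structure N3Like (p q r z : G) (N : ℕ) : Prop where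
  hz : z = p ^ N
  hz2 : z * z = 1
  hq : q * q = 1
  hr : r * r = 1
  hqp : q * p = p * q
  hrp : r * p = p⁻¹ * r
  hrq : r * q = q * z * r

namespace N3Like

lemma q_zpow (h : N3Like p q r z N) (a : ℤ) : q * p ^ a = p ^ a * q :=
  (Commute.zpow_right (show Commute q p from h.hqp) a)

lemma r_zpow (h : N3Like p q r z N) (a : ℤ) : r * p ^ a = p ^ (-a) * r := by
  have : SemiconjBy r p p⁻¹ := h.hrp
  have := this.zpow_right a
  rw [inv_zpow'] at this
  exact this

lemma z_zpow (h : N3Like p q r z N) : z = p ^ (N : ℤ) := by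
  rw [h.hz, zpow_natCast]

lemma q_z (h : N3Like p q r z N) : q * z = z * q := by
  rw [h.z_zpow, h.q_zpow]

lemma p_z (h : N3Like p q r z N) (a : ℤ) : p ^ a * z = z * p ^ a := by
  rw [h.z_zpow, ← zpow_add, ← zpow_add, add_comm]

lemma z_inv (h : N3Like p q r z N) : z⁻¹ = z := inv_eq_of_mul_eq_one_left h.hz2

lemma r_z (h : N3Like p q r z N) : r * z = z * r := by
  conv_rhs => rw [← h.z_inv]
  rw [h.z_zpow, h.r_zpow, zpow_neg]

/-- The four shapes `p^a`, `p^a q`, `p^a r`, `p^a q r`. -/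
def Form (p q r g : G) : Prop :=
  ∃ a : ℤ, g = p ^ a ∨ g = p ^ a * q ∨ g = p ^ a * r ∨ g = p ^ a * q * r

lemma form_p_mul (k : ℤ) {g : G} (hg : Form p q r g) : Form p q r (p ^ k * g) := by
  obtain ⟨a, rfl | rfl | rfl | rfl⟩ := hg <;> refine ⟨k + a, ?_⟩ <;> simp [zpow_add, mul_assoc]

lemma form_q_mul (h : N3Like p q r z N) {g : G} (hg : Form p q r g) : Form p q r (q * g) := by
  obtain ⟨a, rfl | rfl | rfl | rfl⟩ := hg <;> refine ⟨a, ?_⟩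
  · right; left; exact h.q_zpow a
  · left; rw [← mul_assoc, h.q_zpow, mul_assoc, h.hq, mul_one]
  · right; right; right; rw [← mul_assoc, h.q_zpow]
  · right; right; left
    rw [← mul_assoc, ← mul_assoc, h.q_zpow, mul_assoc _ q q, h.hq, mul_one]

lemma r_pq (h : N3Like p q r z N) (a : ℤ) : r * (p ^ a * q) = p ^ (-a + N) * q * r := by
  rw [← mul_assoc, h.r_zpow, mul_assoc, h.hrq, zpow_add, ← h.z_zpow, h.q_z]
  simp only [mul_assoc]

lemma form_r_mul (h : N3Like p q r z N) {g : G} (hg : Form p q r g) : Form p q r (r * g) := by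
  obtain ⟨a, rfl | rfl | rfl | rfl⟩ := hg
  · exact ⟨-a, by right; right; left; exact h.r_zpow a⟩
  · exact ⟨-a + N, by right; right; right; exact h.r_pq a⟩
  · refine ⟨-a, Or.inl ?_⟩
    rw [← mul_assoc, h.r_zpow, mul_assoc, h.hr, mul_one]
  · refine ⟨-a + N, Or.inr (Or.inl ?_)⟩
    rw [← mul_assoc, h.r_pq, mul_assoc, h.hr, mul_one]

lemma sq_pqr (h : N3Like p q r z N) (a : ℤ) : (p ^ a * q * r) ^ 2 = z := by
  calc (p ^ a * q * r) ^ 2 = p ^ a * q * (r * (p ^ a * q)) * r := by rw [sq]; simp only [mul_assoc]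
    _ = p ^ a * (q * p ^ (-a + N : ℤ)) * (q * (r * r)) := by rw [h.r_pq]; simp only [mul_assoc]
    _ = p ^ a * p ^ (-a + N : ℤ) * (q * q) := by rw [h.q_zpow, h.hr, mul_one]; simp only [mul_assoc]
    _ = z := by rw [h.hq, mul_one, ← zpow_add, h.z_zpow]; congr 1; ring

lemma pr_mul_pr (h : N3Like p q r z N) (a k : ℤ) :
    (p ^ a * r) * (p ^ k * r) = p ^ (a - k) := by
  calc (p ^ a * r) * (p ^ k * r) = p ^ a * (r * p ^ k) * r := by simp only [mul_assoc]
    _ = p ^ a * p ^ (-k) * (r * r) := by rw [h.r_zpow]; simp only [mul_assoc]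
    _ = p ^ (a - k) := by rw [h.hr, mul_one, ← zpow_add, sub_eq_add_neg]

lemma pq_mul_pr (h : N3Like p q r z N) (a k : ℤ) :
    (p ^ a * q) * (p ^ k * r) = p ^ (a + k) * q * r := by
  rw [zpow_add, mul_assoc, ← mul_assoc q, h.q_zpow]; simp only [mul_assoc]

lemma pr_mul_pq (h : N3Like p q r z N) (a k : ℤ) :
    (p ^ k * r) * (p ^ a * q) = p ^ (k + (-a + N)) * q * r := by
  rw [mul_assoc, h.r_pq, zpow_add p k]; simp only [mul_assoc]

/-- An involution `p^a` commutes with every `p^k r`. -/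
lemma p_comm_pr (h : N3Like p q r z N) {a : ℤ} (k : ℤ) (ha : (p ^ a) ^ 2 = 1) :
    p ^ a * (p ^ k * r) = (p ^ k * r) * p ^ a := by
  have e : p ^ (-a) = p ^ a := by
    rw [zpow_neg]; exact inv_eq_of_mul_eq_one_left (by rw [← sq, ha])
  rw [mul_assoc, h.r_zpow, e, ← mul_assoc, ← mul_assoc, ← zpow_add, ← zpow_add, add_comm]

lemma p_comm_pq (h : N3Like p q r z N) (a k : ℤ) :
    p ^ a * (p ^ k * q) = (p ^ k * q) * p ^ a := by
  rw [mul_assoc, h.q_zpow, ← mul_assoc, ← mul_assoc, ← zpow_add, ← zpow_add, add_comm]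

lemma pq_comm_pq (h : N3Like p q r z N) (a k : ℤ) :
    (p ^ a * q) * (p ^ k * q) = (p ^ k * q) * (p ^ a * q) := by
  rw [← mul_assoc, ← mul_assoc, ← h.p_comm_pq, ← h.p_comm_pq, ← mul_assoc, ← mul_assoc,
    ← zpow_add, ← zpow_add, add_comm]

lemma z_comm (h : N3Like p q r z N) {g : G} (hg : Form p q r g) : Commute z g := by
  have hp (a : ℤ) : Commute z (p ^ a) := (h.p_z a).symm
  have hq : Commute z q := h.q_z.symm
  have hr : Commute z r := h.r_z.symm
  obtain ⟨a, rfl | rfl | rfl | rfl⟩ := hg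
  · exact hp a
  · exact (hp a).mul_right hq
  · exact (hp a).mul_right hr
  · exact ((hp a).mul_right hq).mul_right hr

end N3Like

/-- The subgroups of a cyclic 2-group form a chain, so `p^(2^M)`, of order at most 2, is a power of
every nontrivial power of `p`. -/
lemma zpow_two_group_hits {G : Type*} [Group G] (p : G) (M : ℕ) (hp : p ^ 2 ^ (M + 1) = 1)
    (e : ℤ) (he : p ^ e ≠ 1) : ∃ x : ℤ, (p ^ e) ^ x = p ^ 2 ^ M := by
  have he0 : e ≠ 0 := by rintro rfl; simp at he
  obtain ⟨j, u, hu, rfl⟩ : ∃ (j : ℕ) (u : ℤ), Odd u ∧ e = 2 ^ j * u := by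
    obtain ⟨u, h1, h2⟩ := (Int.finiteMultiplicity_iff.2
      ⟨by decide, he0⟩ : FiniteMultiplicity (2 : ℤ) e).exists_eq_pow_mul_and_not_dvd
    exact ⟨_, u, by rwa [← Int.not_even_iff_odd, even_iff_two_dvd], h1⟩
  have hpz : p ^ ((2 : ℤ) ^ (M + 1)) = 1 := by
    rw [← hp, ← zpow_natCast]; push_cast; rfl
  have hj : j ≤ M := by
    by_contra hlt
    apply he
    obtain ⟨c, rfl⟩ := Nat.exists_eq_add_of_le (show M + 1 ≤ j by omega)
    rw [pow_add (2 : ℤ) (M + 1), mul_assoc, zpow_mul, hpz, one_zpow]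
  obtain ⟨c, rfl⟩ := Nat.exists_eq_add_of_le hj
  obtain ⟨v, rfl⟩ := hu
  refine ⟨2 ^ c, ?_⟩
  rw [← zpow_mul, show (2 : ℤ) ^ j * (2 * v + 1) * 2 ^ c = 2 ^ (j + c + 1) * v + 2 ^ (j + c) by ring,
    zpow_add, zpow_mul, hpz, one_zpow, one_mul, ← zpow_natCast]
  push_cast; rfl

/-- The first claim, for any pair of elements in normal form. -/
lemma N3Like.exists_zpow {M : ℕ} (h : N3Like p q r z (2 ^ M)) (hz1 : z ≠ 1)
    {s t : G} (hs : N3Like.Form p q r s) (ht : N3Like.Form p q r t)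
    (hs2 : s ^ 2 = 1) (ht2 : t ^ 2 = 1) (hst : s * t ≠ t * s) :
    ∃ x : ℤ, (s * t) ^ (2 * x) = z := by
  obtain ⟨a, rfl | rfl | rfl | rfl⟩ := hs <;> obtain ⟨k, rfl | rfl | rfl | rfl⟩ := ht
  case _ => exact absurd (by rw [← zpow_add, ← zpow_add, add_comm]) hst
  case _ => exact absurd (h.p_comm_pq a k) hst
  case _ => exact absurd (h.p_comm_pr k hs2) hst
  case _ => exact absurd ((h.sq_pqr k).symm.trans ht2) hz1
  case _ => exact absurd (h.p_comm_pq k a).symm hst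
  case _ => exact absurd (h.pq_comm_pq a k) hst
  case _ => exact ⟨1, by rw [h.pq_mul_pr, mul_one, zpow_ofNat]; exact h.sq_pqr _⟩
  case _ => exact absurd ((h.sq_pqr k).symm.trans ht2) hz1
  case _ => exact absurd (h.p_comm_pr a ht2).symm hst
  case _ => exact ⟨1, by rw [h.pr_mul_pq, mul_one, zpow_ofNat]; exact h.sq_pqr _⟩
  case _ =>
    have hp : p ^ 2 ^ (M + 1) = 1 := by
      rw [pow_succ, mul_two, pow_add, ← h.hz, h.hz2]
    rw [h.pr_mul_pr, h.pr_mul_pr] at hst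
    obtain ⟨x, hx⟩ := zpow_two_group_hits p M hp ((a - k) * 2) (by
      intro h1
      apply hst
      rw [show (a - k) * 2 = (a - k) - (k - a) by ring, zpow_sub] at h1
      exact mul_inv_eq_one.1 h1)
    refine ⟨x, ?_⟩
    rw [h.pr_mul_pr, zpow_mul, ← zpow_mul p, hx, h.hz]
  case _ => exact absurd ((h.sq_pqr k).symm.trans ht2) hz1
  all_goals exact absurd ((h.sq_pqr a).symm.trans hs2) hz1

end Abstract

/-! ### Normal form in the presented group -/

lemma N3_like (m : ℕ) (hm : 6 ≤ m) :
    N3Like (PresentedGroup.of 0 : N3grp m) (PresentedGroup.of 1) (PresentedGroup.of 2)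
      (PresentedGroup.of 0 ^ 2 ^ (m - 3)) (2 ^ (m - 3)) := by
  obtain ⟨φ, hφ, key⟩ : ∃ φ : FreeGroup (Fin 3) →* N3grp m,
      (∀ i, φ (FreeGroup.of i) = PresentedGroup.of i) ∧ ∀ w ∈ N3rels m, φ w = 1 :=
    ⟨PresentedGroup.mk (N3rels m), fun _ => rfl, fun w hw => PresentedGroup.one_of_mem hw⟩
  simp only [N3rels, Set.mem_insert_iff, Set.mem_singleton_iff, forall_eq_or_imp, forall_eq,
    map_mul, map_pow, map_inv] at key
  have hφ0 := hφ 0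
  have hφ1 := hφ 1
  have hφ2 := hφ 2
  rw [← hφ0, ← hφ1, ← hφ2]
  generalize φ (FreeGroup.of 0) = p at *
  generalize φ (FreeGroup.of 1) = q at *
  generalize φ (FreeGroup.of 2) = r at *
  obtain ⟨h1, h2, h3, h4, h5, h6⟩ := key
  rw [sq] at h2 h3
  have hri : r⁻¹ = r := inv_eq_of_mul_eq_one_left h3
  refine ⟨rfl, ?_, h2, h3, ?_, ?_, ?_⟩
  · rw [← pow_add, ← two_mul, ← pow_succ', show m - 3 + 1 = m - 2 by omega, h1]
  · rw [mul_inv_eq_one, mul_assoc, inv_mul_eq_iff_eq_mul] at h4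
    exact h4.symm
  · have := eq_inv_of_mul_eq_one_left h5
    rw [← this, hri, mul_assoc, h3, mul_one]
  · rw [mul_inv_eq_one, hri] at h6
    rw [← h6, mul_assoc _ r r, h3, mul_one]

lemma N3_normal_form (m : ℕ) (hm : 6 ≤ m) (g : N3grp m) :
    N3Like.Form (PresentedGroup.of 0 : N3grp m) (PresentedGroup.of 1) (PresentedGroup.of 2) g := by
  have h := N3_like m hm
  have hg : g ∈ Subgroup.closure (Set.range (PresentedGroup.of (rels := N3rels m))) := by
    rw [PresentedGroup.closure_range_of]; trivial
  induction hg using Subgroup.closure_induction_left with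
  | one => exact ⟨0, by simp⟩
  | mul_left x hx y hy ih =>
    obtain ⟨i, rfl⟩ := hx
    fin_cases i
    · simpa using N3Like.form_p_mul 1 ih
    · exact h.form_q_mul ih
    · exact h.form_r_mul ih
  | inv_mul_cancel x hx y hy ih =>
    obtain ⟨i, rfl⟩ := hx
    fin_cases i
    · simpa using N3Like.form_p_mul (-1) ih
    · have e := inv_eq_of_mul_eq_one_left h.hq
      simpa [e] using h.form_q_mul ih
    · have e := inv_eq_of_mul_eq_one_left h.hr
      simpa [e] using h.form_r_mul ih

/-! ### Representations: `z ≠ 1` and the number of generators -/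

/-- A homomorphism out of `N3grp m` is given by images of the generators that satisfy the
relations. -/
lemma N3_exists_hom (m : ℕ) {H : Type*} [Group H] (f : Fin 3 → H)
    (h1 : f 0 ^ 2 ^ (m - 2) = 1) (h2 : f 1 ^ 2 = 1) (h3 : f 2 ^ 2 = 1)
    (h4 : (f 1)⁻¹ * f 0 * f 1 * (f 0)⁻¹ = 1) (h5 : (f 2)⁻¹ * f 0 * f 2 * f 0 = 1)
    (h6 : (f 2)⁻¹ * f 1 * f 2 * (f 1 * f 0 ^ 2 ^ (m - 3))⁻¹ = 1) :
    ∃ φ : N3grp m →* H, ∀ i, φ (PresentedGroup.of i) = f i := by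
  have key : ∀ w ∈ N3rels m, FreeGroup.lift f w = 1 := by
    simp only [N3rels, Set.mem_insert_iff, Set.mem_singleton_iff, forall_eq_or_imp, forall_eq,
      map_mul, map_pow, map_inv, FreeGroup.lift_apply_of]
    exact ⟨h1, h2, h3, h4, h5, h6⟩
  exact ⟨PresentedGroup.toGroup key, fun i => PresentedGroup.toGroup.of key⟩

/-- The image of `p` in a permutation representation of `N3grp` on `ZMod n × Bool` with `n` the
order of `p`: translation by `1` on one copy of `ZMod n` and by `-1` on the other. -/
def permP (n : ℕ) : Equiv.Perm (ZMod n × Bool) where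
  toFun x := (x.1 + (if x.2 then 1 else -1), x.2)
  invFun x := (x.1 - (if x.2 then 1 else -1), x.2)
  left_inv x := by simp
  right_inv x := by simp

/-- The image of `q`: translation by `c` (half the order of `p`) on one copy of `ZMod n` only. -/
def permQ (n : ℕ) (c : ZMod n) : Equiv.Perm (ZMod n × Bool) where
  toFun x := (x.1 + (if x.2 then c else 0), x.2)
  invFun x := (x.1 - (if x.2 then c else 0), x.2)
  left_inv x := by simp
  right_inv x := by simp

/-- The image of `r`: the exchange of the two copies of `ZMod n`. -/
def permR (n : ℕ) : Equiv.Perm (ZMod n × Bool) where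
  toFun x := (x.1, !x.2)
  invFun x := (x.1, !x.2)
  left_inv x := by simp
  right_inv x := by simp

lemma permP_pow (n k : ℕ) (x : ZMod n × Bool) :
    (permP n ^ k) x = (x.1 + k * (if x.2 then 1 else -1), x.2) := by
  induction k with
  | zero => simp
  | succ k ih =>
    rw [pow_succ', Equiv.Perm.mul_apply, ih]
    simp only [permP, Equiv.coe_fn_mk, Prod.mk.injEq, and_true]
    push_cast; ring

lemma N3_z_ne_one (m : ℕ) (hm : 6 ≤ m) :
    (PresentedGroup.of 0 : N3grp m) ^ 2 ^ (m - 3) ≠ 1 := by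
  obtain ⟨M, rfl⟩ := Nat.exists_eq_add_of_le (show 3 ≤ m by omega)
  have e2 : 3 + M - 2 = M + 1 := by omega
  have e3 : 3 + M - 3 = M := by omega
  set n := 2 ^ (M + 1) with hn
  set c : ZMod n := ((2 ^ M : ℕ) : ZMod n) with hc
  have hcc : c + c = 0 := by
    rw [hc, ← Nat.cast_add, ← two_mul, ← pow_succ', ← hn, ZMod.natCast_self]
  have hneg : -c = c := neg_eq_of_add_eq_zero_left hcc
  obtain ⟨φ, hφ⟩ := N3_exists_hom (3 + M) ![permP n, permQ n c, permR n]
    (by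
      rw [e2]; ext1 x
      simp [permP_pow, ← hn])
    (by
      rw [sq]; ext1 ⟨x, b⟩
      cases b <;> simp [permQ, add_assoc, hcc])
    (by
      rw [sq]; ext1 ⟨x, b⟩
      simp [permR])
    (by
      simp only [Matrix.cons_val]
      rw [mul_inv_eq_one, mul_assoc, inv_mul_eq_iff_eq_mul]
      ext1 ⟨x, b⟩
      cases b <;> simp [permQ, permP, add_right_comm])
    (by
      simp only [Matrix.cons_val]
      rw [mul_assoc, mul_assoc, inv_mul_eq_iff_eq_mul]
      ext1 ⟨x, b⟩
      cases b <;> simp [permR, permP])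
    (by
      rw [e3]
      simp only [Matrix.cons_val]
      rw [mul_inv_eq_one, mul_assoc, inv_mul_eq_iff_eq_mul]
      ext1 ⟨x, b⟩
      simp only [Equiv.Perm.mul_apply, permP_pow]
      rw [← hc]
      cases b <;> simp [permR, permQ, hneg, add_assoc, hcc])
  intro h
  have h' := congrArg φ h
  rw [map_pow, hφ, map_one, e3] at h'
  have h0 := congrArg Prod.fst (congrArg (fun σ : Equiv.Perm (ZMod n × Bool) => σ (0, true)) h')
  simp only [Matrix.cons_val, permP_pow, Equiv.Perm.one_apply] at h0
  rw [← hc] at h0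
  simp only [if_true, mul_one, zero_add] at h0
  rw [hc, ZMod.natCast_eq_zero_iff] at h0
  have := Nat.le_of_dvd (by positivity) h0
  rw [hn, pow_succ] at this
  have : 0 < 2 ^ M := by positivity
  omega

/-- Two vectors in `𝔽₂³` lie in a plane. -/
lemma exists_functional : ∀ v w : Fin 3 → ZMod 2, ∃ c : Fin 3 → ZMod 2, c ≠ 0 ∧
    c 0 * v 0 + c 1 * v 1 + c 2 * v 2 = 0 ∧ c 0 * w 0 + c 1 * w 1 + c 2 * w 2 = 0 := by
  decide

/-- A generating family has at least three members: otherwise some nontrivial character to `ℤ/2`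
would kill all of them. -/
lemma N3_three_le (m : ℕ) (hm : 6 ≤ m) (n : ℕ) (s : Fin n → N3grp m)
    (hs : Subgroup.closure (Set.range s) = ⊤) : 3 ≤ n := by
  by_contra hn
  have sq1 (x : Multiplicative (ZMod 2)) : x * x = 1 := by revert x; decide
  have pow1 (x : Multiplicative (ZMod 2)) (k : ℕ) (hk : k ≠ 0) : x ^ 2 ^ k = 1 := by
    obtain ⟨j, rfl⟩ := Nat.exists_eq_succ_of_ne_zero hk
    rw [pow_succ', pow_mul, sq, sq1, one_pow]
  have hom (f : Fin 3 → Multiplicative (ZMod 2)) :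
      ∃ φ : N3grp m →* Multiplicative (ZMod 2), ∀ i, φ (PresentedGroup.of i) = f i := by
    have inv1 (x : Multiplicative (ZMod 2)) : x⁻¹ = x := inv_eq_of_mul_eq_one_left (sq1 x)
    refine N3_exists_hom m f (pow1 _ _ (by omega)) (by rw [sq, sq1]) (by rw [sq, sq1]) ?_ ?_ ?_
    · rw [mul_right_comm, mul_inv_cancel_right, inv_mul_cancel]
    · rw [mul_right_comm, mul_assoc (f 2)⁻¹, sq1, mul_one, inv_mul_cancel]
    · rw [pow1 _ _ (by omega), mul_one, mul_right_comm, mul_inv_cancel_right, inv_mul_cancel]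
  choose χ hχ using fun i : Fin 3 => hom (Pi.mulSingle i (Multiplicative.ofAdd 1))
  let v (g : N3grp m) (i : Fin 3) : ZMod 2 := (χ i g).toAdd
  have hvw : ∃ g h : N3grp m, ∀ i, s i = g ∨ s i = h := by
    by_cases h0 : n = 0
    · subst h0; exact ⟨1, 1, fun i => i.elim0⟩
    · refine ⟨s ⟨0, by omega⟩, s ⟨n - 1, by omega⟩, fun i => ?_⟩
      rcases Nat.eq_zero_or_pos i.1 with hi | hi
      · left; congr 1; exact Fin.ext hi
      · right; congr 1; apply Fin.ext; simp only []; omega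
  obtain ⟨g, h, hgh⟩ := hvw
  obtain ⟨c, hc, hcg, hch⟩ := exists_functional (v g) (v h)
  let K : Subgroup (N3grp m) :=
    { carrier := {x | c 0 * v x 0 + c 1 * v x 1 + c 2 * v x 2 = 0}
      one_mem' := by simp [v]
      mul_mem' := by
        intro x y hx hy
        simp only [Set.mem_ofPred_eq, v, map_mul, toAdd_mul] at hx hy ⊢
        linear_combination hx + hy
      inv_mem' := by
        intro x hx
        simp only [Set.mem_ofPred_eq, v, map_inv, toAdd_inv] at hx ⊢
        linear_combination -hx }
  have hK : K = ⊤ := by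
    rw [eq_top_iff, ← hs, Subgroup.closure_le]
    rintro _ ⟨i, rfl⟩
    rcases hgh i with e | e <;> rw [e]
    · exact hcg
    · exact hch
  apply hc
  funext i
  have hi : (PresentedGroup.of i : N3grp m) ∈ K := hK ▸ Subgroup.mem_top _
  change c 0 * (χ 0 _).toAdd + c 1 * (χ 1 _).toAdd + c 2 * (χ 2 _).toAdd = 0 at hi
  rw [hχ, hχ, hχ] at hi
  fin_cases i <;> simpa [Pi.mulSingle_apply] using hi

/-! ### Non-commuting involutions and string C-groups -/

/-- For m ≥ 6, in the group 𝒩_{II,3}(m), for every pair of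
non-commuting involutions t₀, t₁ there is an integer x with
(t₀t₁)^(2x) = p̄^(2^(m-3)); in particular 𝒩_{II,3}(m) is not a connected string
C-group with respect to any family of distinguished generators. -/
theorem stmt_18 (m : ℕ) (hm : 6 ≤ m) :
    (∀ t₀ t₁ : N3grp m, t₀ ^ 2 = 1 → t₀ ≠ 1 → t₁ ^ 2 = 1 → t₁ ≠ 1 →
      t₀ * t₁ ≠ t₁ * t₀ →
      ∃ x : ℤ, (t₀ * t₁) ^ (2 * x) =
        (PresentedGroup.of (0 : Fin 3) : N3grp m) ^ ((2 : ℕ) ^ (m - 3))) ∧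
    (∀ (n : ℕ) (s : Fin n → N3grp m),
      ¬ (IsStringCGroup s ∧ IsConnectedFamily s)) := by
  refine ⟨fun t₀ t₁ h0 _ h1 _ hne => ?_, ?_⟩
  · exact (N3_like m hm).exists_zpow (N3_z_ne_one m hm) (N3_normal_form m hm t₀)
      (N3_normal_form m hm t₁) h0 h1 hne
  rintro n s ⟨⟨-, hinv, hgen, -, hint⟩, hconn⟩
  have hn := N3_three_le m hm n s hgen
  have hnc (i : ℕ) (h1 : i < n) (h2 : i + 1 < n) :
      s ⟨i, h1⟩ * s ⟨i + 1, h2⟩ ≠ s ⟨i + 1, h2⟩ * s ⟨i, h1⟩ := by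
    intro hc
    have h := hconn i h1 h2
    have h2' : (s ⟨i, h1⟩ * s ⟨i + 1, h2⟩) ^ 2 = 1 := by
      rw [Commute.mul_pow hc, (hinv _).2, (hinv _).2, one_mul]
    exact absurd (orderOf_le_of_pow_eq_one (by norm_num) h2') (by omega)
  -- `z` lies in the subgroup generated by any two adjacent generators.
  have hmem (i : ℕ) (h1 : i < n) (h2 : i + 1 < n) :
      (PresentedGroup.of 0 : N3grp m) ^ 2 ^ (m - 3) ∈
        Subgroup.closure (s '' {⟨i, h1⟩, ⟨i + 1, h2⟩}) := by
    obtain ⟨x, hx⟩ := (N3_like m hm).exists_zpow (N3_z_ne_one m hm) (N3_normal_form m hm _)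
      (N3_normal_form m hm _) (hinv _).2 (hinv _).2 (hnc i h1 h2)
    rw [← hx]
    exact Subgroup.zpow_mem _ (Subgroup.mul_mem _
      (Subgroup.subset_closure (Set.mem_image_of_mem _ (by simp)))
      (Subgroup.subset_closure (Set.mem_image_of_mem _ (by simp)))) _
  have hz := Subgroup.mem_inf.2
    ⟨hmem 0 (by omega) (by omega), hmem 1 (by omega) (by omega)⟩
  have hset : ({⟨0, by omega⟩, ⟨0 + 1, by omega⟩} : Set (Fin n)) ∩
      {⟨1, by omega⟩, ⟨1 + 1, by omega⟩} = {⟨0 + 1, by omega⟩} := by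
    ext x
    simp only [Set.mem_inter_iff, Set.mem_insert_iff, Set.mem_singleton_iff, Fin.ext_iff]
    omega
  rw [hint, hset, Set.image_singleton, Subgroup.mem_closure_singleton] at hz
  obtain ⟨k, hk⟩ := hz
  have hs1 : s ⟨0 + 1, by omega⟩ ^ (2 : ℤ) = 1 := (hinv _).2
  rcases Int.even_or_odd' k with ⟨j, rfl | rfl⟩
  · rw [zpow_mul, hs1, one_zpow] at hk
    exact N3_z_ne_one m hm hk.symm
  · rw [zpow_add, zpow_mul, hs1, one_zpow, one_mul, zpow_one] at hk
    apply hnc 0 (by omega) (by omega)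
    rw [hk]
    exact ((N3_like m hm).z_comm (N3_normal_form m hm _)).symm
end

section
/- For m ≥ 7, let D₁₇(m) be the presented group on generators p, q, r with relations p^(2^(m−3)) = 1, q⁴ = 1, r² = 1, q⁻¹pq = q²p⁻¹, q⁻²pq² = p, r⁻¹pr = q²·p^(1+2^(m−4)), r⁻¹qr = q³ (the group ℳ_{II-D,17}(m), of order 2^m and exponent 2^(m−3)). Then for all involutions s₀, s₁, s₂ ∈ D₁₇(m) forming a connected string diagram (s₀ commutes with s₂, while s₁ commutes with neither s₀ nor s₂), there exist a central involution ζ of D₁₇(m) and integers x₁, x₂ such that (s₀s₁)^(2x₁) = ζ and (s₁s₂)^(2x₂) = ζ. In particular, D₁₇(m) is not a connected string C-group. -/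
/-- The relation set of the presented group ℳ_{II-D,17}(m) on generators p, q, r:
p^(2^(m-3)) = 1, q⁴ = 1, r² = 1, q⁻¹pq = q²p⁻¹, q⁻²pq² = p,
r⁻¹pr = q²·p^(1+2^(m-4)), r⁻¹qr = q³. -/
def D17rels (m : ℕ) : Set (FreeGroup (Fin 3)) :=
  {(FreeGroup.of 0) ^ (2 ^ (m - 3)), (FreeGroup.of 1) ^ 4, (FreeGroup.of 2) ^ 2,
    (FreeGroup.of 1)⁻¹ * FreeGroup.of 0 * FreeGroup.of 1 *
      ((FreeGroup.of 1) ^ 2 * (FreeGroup.of 0)⁻¹)⁻¹,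
    ((FreeGroup.of 1) ^ 2)⁻¹ * FreeGroup.of 0 * (FreeGroup.of 1) ^ 2 *
      (FreeGroup.of 0)⁻¹,
    (FreeGroup.of 2)⁻¹ * FreeGroup.of 0 * FreeGroup.of 2 *
      ((FreeGroup.of 1) ^ 2 * (FreeGroup.of 0) ^ (1 + 2 ^ (m - 4)))⁻¹,
    (FreeGroup.of 2)⁻¹ * FreeGroup.of 1 * FreeGroup.of 2 *
      ((FreeGroup.of 1) ^ 3)⁻¹}

/-- The presented group ℳ_{II-D,17}(m). -/
abbrev D17grp (m : ℕ) : Type := PresentedGroup (D17rels m)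

/-! ### Arithmetic of the generators -/

/-- The working hypotheses on `p`, `q`, `r`: the relations of `D17grp m` together with generation
and the two non-degeneracy facts (`p` has order exactly `2 ^ (m - 3)`, and `q ^ 2 ≠ 1`). -/
structure D17Data {G : Type*} [Group G] (m : ℕ) (p q r : G) : Prop where
  seven_le : 7 ≤ m
  p_zpow : ∀ k : ℤ, p ^ k = 1 ↔ (2 ^ (m - 3) : ℤ) ∣ k
  q_four : q ^ 4 = 1
  r_sq : r ^ 2 = 1
  conj_q : q⁻¹ * p * q = q ^ 2 * p⁻¹
  conj_q_sq : (q ^ 2)⁻¹ * p * q ^ 2 = p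
  conj_r : r⁻¹ * p * r = q ^ 2 * p ^ (1 + 2 ^ (m - 4))
  conj_r_q : r⁻¹ * q * r = q ^ 3
  q_sq_ne : q ^ 2 ≠ 1
  gen : Subgroup.closure {p, q, r} = ⊤

namespace D17Data

variable {G : Type*} [Group G] {m : ℕ} {p q r : G}

theorem mem_center_of (D : D17Data m p q r) {g : G} (hp : Commute p g) (hq : Commute q g)
    (hr : Commute r g) : g ∈ Subgroup.center G := by
  have h1 : Subgroup.closure {p, q, r} ≤ Subgroup.centralizer {g} := by
    rw [Subgroup.closure_le]
    rintro x (rfl | rfl | rfl) <;> simp only [SetLike.mem_coe, Subgroup.mem_centralizer_singleton_iff]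
    exacts [hp, hq, hr]
  rw [D.gen] at h1
  rw [Subgroup.mem_center_iff]
  intro x
  exact Subgroup.mem_centralizer_singleton_iff.1 (h1 (Subgroup.mem_top x))

theorem r_mul_r (D : D17Data m p q r) : r * r = 1 := by rw [← pow_two, D.r_sq]

theorem z_mul_z (D : D17Data m p q r) : q ^ 2 * q ^ 2 = 1 := by rw [← pow_add, D.q_four]

theorem r_mul_q (D : D17Data m p q r) : r * q = q ^ 2 * (q * r) := by
  have h1 : q * r = r * q ^ 3 := by rw [← D.conj_r_q]; group
  have h2 : q ^ 3 * q ^ 3 = q ^ 2 := by rw [← pow_add, show 3 + 3 = 4 + 2 from rfl, pow_add, D.q_four, one_mul]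
  have h3 : r * q ^ 3 * r⁻¹ = q := by rw [← h1]; group
  have h4 : r * q ^ 9 * r⁻¹ = q ^ 3 := by
    calc r * q ^ 9 * r⁻¹ = (r * q ^ 3 * r⁻¹) ^ 3 := by rw [conj_pow]; simp only [← pow_mul]
      _ = q ^ 3 := by rw [h3]
  have h5 : q ^ 9 = q := by
    rw [show 9 = 4 + 4 + 1 from rfl, pow_add, pow_add, D.q_four]; simp
  rw [h5] at h4
  rw [← mul_assoc, ← pow_succ, ← h4]; group

theorem z_mem_center (D : D17Data m p q r) : q ^ 2 ∈ Subgroup.center G := by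
  apply D.mem_center_of
  · have := D.conj_q_sq
    rw [mul_assoc, inv_mul_eq_iff_eq_mul] at this
    exact this
  · exact Commute.self_pow q 2
  · have h : r * q * r⁻¹ = q ^ 3 := by
      rw [D.r_mul_q, ← mul_assoc, ← pow_succ]; group
    have h2 : r * q ^ 2 * r⁻¹ = q ^ 2 := by
      rw [← conj_pow, h, ← pow_mul, show 3 * 2 = 4 + 2 from rfl, pow_add, D.q_four, one_mul]
    exact mul_inv_eq_iff_eq_mul.1 h2

theorem z_comm (D : D17Data m p q r) (g : G) : g * q ^ 2 = q ^ 2 * g :=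
  Subgroup.mem_center_iff.1 D.z_mem_center g

theorem z_zpow_even (D : D17Data m p q r) {a : ℤ} (ha : Even a) : (q ^ 2) ^ a = 1 := by
  obtain ⟨k, rfl⟩ := ha
  rw [← two_mul, zpow_mul, zpow_ofNat, pow_two, D.z_mul_z, one_zpow]

theorem z_zpow_odd (D : D17Data m p q r) {a : ℤ} (ha : Odd a) : (q ^ 2) ^ a = q ^ 2 := by
  obtain ⟨k, rfl⟩ := ha
  rw [zpow_add, D.z_zpow_even (even_two_mul k), one_mul, zpow_one]

theorem q_mul_zpow (D : D17Data m p q r) (a : ℤ) :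
    q * p ^ a = (q ^ 2) ^ a * (p ^ (-a) * q) := by
  have h1 : q⁻¹ * p ^ (-a) * q = (q ^ 2) ^ (-a) * p ^ a := by
    have := conj_zpow (i := -a) (a := q⁻¹) (b := p)
    rw [inv_inv] at this
    rw [← this, D.conj_q, (show Commute (q ^ 2) p⁻¹ from (D.z_comm _).symm).mul_zpow, inv_zpow', neg_neg]
  have h2 : p ^ (-a) * q = q * ((q ^ 2) ^ (-a) * p ^ a) := by rw [← h1]; group
  rw [h2, ← mul_assoc, ← mul_assoc]
  have h3 : (q ^ 2) ^ a * q = q * (q ^ 2) ^ a :=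
    ((Commute.self_pow q 2).symm.zpow_left a).eq
  rw [h3, mul_assoc q, ← zpow_add]; simp

theorem r_mul_zpow (D : D17Data m p q r) (a : ℤ) :
    r * p ^ a = (q ^ 2) ^ a * (p ^ (a + 2 ^ (m - 4) * a) * r) := by
  have hr : r⁻¹ = r := inv_eq_of_mul_eq_one_left D.r_mul_r
  have h1 : r * p ^ a * r⁻¹ = (q ^ 2) ^ a * p ^ (a + 2 ^ (m - 4) * a) := by
    have h0 := D.conj_r
    rw [hr] at h0
    have hc : Commute (q ^ 2) (p ^ (1 + 2 ^ (m - 4))) := (D.z_comm _).symm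
    rw [← conj_zpow, hr, h0, hc.mul_zpow, ← zpow_natCast p, ← zpow_mul]
    congr 2
    push_cast
    ring
  rw [mul_inv_eq_iff_eq_mul, mul_assoc] at h1
  exact h1

theorem two_mul_u (D : D17Data m p q r) : (2 : ℤ) ^ (m - 3) = 2 * 2 ^ (m - 4) := by
  rw [← pow_succ']
  congr 1
  have := D.seven_le
  omega

theorem u_eq (D : D17Data m p q r) : (2 : ℤ) ^ (m - 4) = 8 * 2 ^ (m - 7) := by
  rw [show (8 : ℤ) = 2 ^ 3 by norm_num, ← pow_add]
  congr 1
  have := D.seven_le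
  omega

theorem h_sq (D : D17Data m p q r) : (p ^ (2 ^ (m - 4) : ℤ)) ^ 2 = 1 := by
  rw [← zpow_natCast, ← zpow_mul, D.p_zpow, D.two_mul_u, mul_comm]; simp

theorem h_ne_one (D : D17Data m p q r) : p ^ (2 ^ (m - 4) : ℤ) ≠ 1 := by
  rw [Ne, D.p_zpow, D.two_mul_u]
  intro h
  have h1 := Int.le_of_dvd (by positivity) h
  have h2 : (0 : ℤ) < 2 ^ (m - 4) := by positivity
  omega

theorem h_zpow_even (D : D17Data m p q r) {a : ℤ} (ha : Even a) :
    p ^ (2 ^ (m - 4) * a : ℤ) = 1 := by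
  obtain ⟨k, rfl⟩ := ha
  rw [D.p_zpow, D.two_mul_u]
  exact ⟨k, by ring⟩

theorem h_zpow_odd (D : D17Data m p q r) {a : ℤ} (ha : Odd a) :
    p ^ (2 ^ (m - 4) * a : ℤ) = p ^ (2 ^ (m - 4) : ℤ) := by
  obtain ⟨k, rfl⟩ := ha
  rw [mul_add, zpow_add, D.h_zpow_even (even_two_mul k), one_mul, mul_one]

theorem q_mul_even (D : D17Data m p q r) {a : ℤ} (ha : Even a) :
    q * p ^ a = p ^ (-a) * q := by
  rw [D.q_mul_zpow, D.z_zpow_even ha, one_mul]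

theorem q_mul_odd (D : D17Data m p q r) {a : ℤ} (ha : Odd a) :
    q * p ^ a = q ^ 2 * (p ^ (-a) * q) := by
  rw [D.q_mul_zpow, D.z_zpow_odd ha]

theorem r_mul_even (D : D17Data m p q r) {a : ℤ} (ha : Even a) :
    r * p ^ a = p ^ a * r := by
  rw [D.r_mul_zpow, D.z_zpow_even ha, one_mul, zpow_add, D.h_zpow_even ha, mul_one]

theorem r_mul_odd (D : D17Data m p q r) {a : ℤ} (ha : Odd a) :
    r * p ^ a = q ^ 2 * (p ^ (a + 2 ^ (m - 4)) * r) := by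
  rw [D.r_mul_zpow, D.z_zpow_odd ha, zpow_add, D.h_zpow_odd ha, zpow_add]

theorem u_even (D : D17Data m p q r) : Even ((2 : ℤ) ^ (m - 4)) := by
  rw [D.u_eq]; exact ⟨4 * 2 ^ (m - 7), by ring⟩

theorem h_mem_center (D : D17Data m p q r) : p ^ (2 ^ (m - 4) : ℤ) ∈ Subgroup.center G := by
  apply D.mem_center_of
  · exact Commute.self_zpow p _
  · have hi : p ^ (-(2 ^ (m - 4)) : ℤ) = p ^ (2 ^ (m - 4) : ℤ) := by
      rw [zpow_neg, inv_eq_iff_mul_eq_one, ← pow_two, D.h_sq]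
    rw [commute_iff_eq, D.q_mul_even D.u_even, hi]
  · exact D.r_mul_even D.u_even

/-- `⟨p⟩` is a cyclic `2`-group, so each of its nontrivial subgroups contains its only
involution `p ^ 2 ^ (m - 4)`. -/
theorem exists_zpow_eq_h (D : D17Data m p q r) {k : ℤ} (hk : p ^ k ≠ 1) :
    ∃ x : ℤ, (p ^ k) ^ x = p ^ (2 ^ (m - 4) : ℤ) := by
  rw [Ne, D.p_zpow] at hk
  have hk0 : k ≠ 0 := by rintro rfl; simp at hk
  obtain ⟨i, c, hc, rfl⟩ : ∃ (i : ℕ) (c : ℤ), ¬ (2 : ℤ) ∣ c ∧ k = 2 ^ i * c := by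
    obtain ⟨c, h1, h2⟩ := (Int.finiteMultiplicity_iff.2 ⟨by norm_num, hk0⟩ :
      FiniteMultiplicity (2 : ℤ) k).exists_eq_pow_mul_and_not_dvd
    exact ⟨_, c, h2, h1⟩
  have hi : i < m - 3 := by
    by_contra! hle
    exact hk (Dvd.dvd.mul_right (pow_dvd_pow 2 hle) c)
  refine ⟨2 ^ (m - 4 - i), ?_⟩
  have hodd : Odd c := by rwa [← Int.not_even_iff_odd, even_iff_two_dvd]
  rw [← zpow_mul, ← D.h_zpow_odd hodd]
  congr 1
  rw [mul_right_comm, ← pow_add]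
  congr 2
  omega

theorem mem_center_of_zpow_sq (D : D17Data m p q r) {a : ℤ} (ha : p ^ (2 * a) = 1) :
    p ^ a ∈ Subgroup.center G := by
  rw [D.p_zpow, D.two_mul_u] at ha
  obtain ⟨e, rfl⟩ : (2 ^ (m - 4) : ℤ) ∣ a := (mul_dvd_mul_iff_left two_ne_zero).1 ha
  rw [zpow_mul]
  exact Subgroup.zpow_mem _ D.h_mem_center e

theorem p_zpow_four_mul_ne (D : D17Data m p q r) {a : ℤ} (ha : Odd a) : p ^ (4 * a) ≠ 1 := by
  rw [Ne, D.p_zpow, D.two_mul_u, D.u_eq]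
  rintro ⟨e, he⟩
  obtain ⟨k, rfl⟩ := ha
  have : 4 * (2 * k + 1) = 16 * (2 ^ (m - 7) * e) := by rw [he]; ring
  omega

/-! ### Squares in normal form -/

theorem sq_pq_odd (D : D17Data m p q r) {a : ℤ} (ha : Odd a) : (p ^ a * q) ^ 2 = 1 := by
  calc (p ^ a * q) ^ 2 = p ^ a * (q * p ^ a) * q := by simp only [pow_two, mul_assoc]
    _ = (p ^ a * q ^ 2) * p ^ (-a) * (q * q) := by rw [D.q_mul_odd ha]; simp only [mul_assoc]
    _ = q ^ 2 * q ^ 2 := by rw [D.z_comm, ← pow_two q]; group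
    _ = 1 := D.z_mul_z

theorem sq_pq_even (D : D17Data m p q r) {a : ℤ} (ha : Even a) : (p ^ a * q) ^ 2 = q ^ 2 := by
  calc (p ^ a * q) ^ 2 = p ^ a * (q * p ^ a) * q := by simp only [pow_two, mul_assoc]
    _ = q ^ 2 := by rw [D.q_mul_even ha, pow_two]; group

theorem sq_pr_even (D : D17Data m p q r) {a : ℤ} (ha : Even a) :
    (p ^ a * r) ^ 2 = p ^ (2 * a) := by
  have hc : Commute (p ^ a) r := (D.r_mul_even ha).symm
  rw [hc.mul_pow, D.r_sq, mul_one, ← zpow_natCast, ← zpow_mul, mul_comm]; simp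

theorem pow_four_pr_odd (D : D17Data m p q r) {a : ℤ} (ha : Odd a) :
    ((p ^ a * r) ^ 2) ^ 2 = p ^ (4 * a) := by
  have h1 : (p ^ a * r) ^ 2 = q ^ 2 * p ^ (2 * a + 2 ^ (m - 4)) := by
    calc (p ^ a * r) ^ 2 = p ^ a * (r * p ^ a) * r := by simp only [pow_two, mul_assoc]
      _ = (p ^ a * q ^ 2) * p ^ (a + 2 ^ (m - 4)) * (r * r) := by
        rw [D.r_mul_odd ha]; simp only [mul_assoc]
      _ = _ := by
        rw [D.z_comm, D.r_mul_r, mul_one, mul_assoc, ← zpow_add]; congr 2; ring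
  have hc : Commute (q ^ 2) (p ^ (2 * a + 2 ^ (m - 4))) := (D.z_comm _).symm
  rw [h1, hc.mul_pow, pow_two (q ^ 2), D.z_mul_z, one_mul, zpow_add,
    (Commute.zpow_zpow_self p _ _).mul_pow, D.h_sq, mul_one, ← zpow_natCast, ← zpow_mul]
  congr 1
  push_cast
  ring

theorem pqr_mul_self (D : D17Data m p q r) (a b : ℤ) :
    (p ^ a * q * r) * (p ^ b * q * r) = p ^ (a - (b + 2 ^ (m - 4) * b)) := by
  have hz : ∀ g : G, (q ^ 2) ^ b * g = g * (q ^ 2) ^ b := fun g =>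
    (Subgroup.mem_center_iff.1 (Subgroup.zpow_mem _ D.z_mem_center b) g).symm
  have hp : (2 : ℤ) ∣ 2 ^ (m - 4) * b := Dvd.dvd.mul_right D.u_even.two_dvd b
  have hz2 : (q ^ 2) ^ b * (q ^ 2) ^ (b + 2 ^ (m - 4) * b) = 1 := by
    rw [← zpow_add]; apply D.z_zpow_even
    rw [even_iff_two_dvd]; omega
  calc (p ^ a * q * r) * (p ^ b * q * r) = p ^ a * q * (r * p ^ b) * q * r := by
        simp only [mul_assoc]
    _ = (q ^ 2) ^ b * (p ^ a * (q * p ^ (b + 2 ^ (m - 4) * b)) * (r * q) * r) := by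
        rw [D.r_mul_zpow, ← mul_assoc (p ^ a * q), ← hz]; simp only [mul_assoc]
    _ = ((q ^ 2) ^ b * (q ^ 2) ^ (b + 2 ^ (m - 4) * b)) *
          (p ^ a * p ^ (-(b + 2 ^ (m - 4) * b)) * (q * (r * q) * r)) := by
        have hz' : ∀ g : G, g * (q ^ 2) ^ (b + 2 ^ (m - 4) * b) =
          (q ^ 2) ^ (b + 2 ^ (m - 4) * b) * g := fun g =>
          (Subgroup.mem_center_iff.1 (Subgroup.zpow_mem _ D.z_mem_center _) g)
        rw [D.q_mul_zpow, ← mul_assoc (p ^ a), hz']; simp only [mul_assoc]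
    _ = p ^ a * p ^ (-(b + 2 ^ (m - 4) * b)) * ((q * q ^ 2 * q) * (r * r)) := by
        rw [hz2, one_mul, D.r_mul_q]; simp only [mul_assoc]
    _ = _ := by
        rw [D.z_comm, mul_assoc (q ^ 2), ← pow_two q, D.z_mul_z, D.r_mul_r, one_mul, mul_one,
          ← zpow_add, sub_eq_add_neg]

theorem pqr_mul_pqr (D : D17Data m p q r) (a : ℤ) {b : ℤ} (hb : Even b) :
    (p ^ a * q * r) * (p ^ b * q * r) = p ^ (a - b) := by
  rw [D.pqr_mul_self, sub_add_eq_sub_sub, zpow_sub, D.h_zpow_even hb, inv_one, mul_one]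

theorem sq_pqr_odd (D : D17Data m p q r) {a : ℤ} (ha : Odd a) : (p ^ a * q * r) ^ 2 ≠ 1 := by
  rw [pow_two, D.pqr_mul_self, sub_add_cancel_left, zpow_neg, D.h_zpow_odd ha, Ne, inv_eq_one]
  exact D.h_ne_one

theorem pq_mul_pq (D : D17Data m p q r) (a : ℤ) {b : ℤ} (hb : Odd b) :
    (p ^ a * q) * (p ^ b * q) = p ^ (a - b) := by
  calc (p ^ a * q) * (p ^ b * q) = p ^ a * (q * p ^ b) * q := by simp only [mul_assoc]
    _ = (p ^ a * q ^ 2) * p ^ (-b) * (q * q) := by rw [D.q_mul_odd hb]; simp only [mul_assoc]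
    _ = q ^ 2 * (p ^ a * p ^ (-b) * q ^ 2) := by rw [D.z_comm, ← pow_two q]; simp only [mul_assoc]
    _ = _ := by rw [D.z_comm, ← mul_assoc, D.z_mul_z, one_mul, ← zpow_add, sub_eq_add_neg]

theorem pq_mul_pqr (D : D17Data m p q r) (a : ℤ) {b : ℤ} (hb : Even b) :
    (p ^ a * q) * (p ^ b * q * r) = q ^ 2 * (p ^ (a - b) * r) := by
  calc (p ^ a * q) * (p ^ b * q * r) = p ^ a * (q * p ^ b) * q * r := by simp only [mul_assoc]
    _ = (p ^ a * p ^ (-b) * (q * q)) * r := by rw [D.q_mul_even hb]; simp only [mul_assoc]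
    _ = _ := by rw [← pow_two q, D.z_comm, ← zpow_add, sub_eq_add_neg, mul_assoc]

theorem sq_r_pq (D : D17Data m p q r) {a : ℤ} (ha : Odd a) :
    (r * (p ^ a * q)) ^ 2 = p ^ (2 ^ (m - 4) : ℤ) := by
  have h1 : r * (p ^ a * q) = p ^ (2 ^ (m - 4) : ℤ) * (p ^ a * q * r) := by
    calc r * (p ^ a * q) = q ^ 2 * p ^ (a + 2 ^ (m - 4)) * (r * q) := by
          rw [← mul_assoc, D.r_mul_odd ha]; simp only [mul_assoc]
      _ = q ^ 2 * (p ^ (a + 2 ^ (m - 4)) * q ^ 2) * (q * r) := by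
          rw [D.r_mul_q]; simp only [mul_assoc]
      _ = (q ^ 2 * q ^ 2) * p ^ (a + 2 ^ (m - 4)) * (q * r) := by
          rw [D.z_comm]; simp only [mul_assoc]
      _ = _ := by
          rw [D.z_mul_z, one_mul, add_comm, zpow_add]; simp only [mul_assoc]
  have hc : Commute (p ^ (2 ^ (m - 4) : ℤ)) (p ^ a * q * r) :=
    (Subgroup.mem_center_iff.1 D.h_mem_center _).symm
  rw [h1, hc.mul_pow, D.h_sq, one_mul, pow_two, D.pqr_mul_self, sub_add_cancel_left, zpow_neg,
    D.h_zpow_odd ha, inv_eq_iff_mul_eq_one, ← pow_two, D.h_sq]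

theorem sq_r_pqr (D : D17Data m p q r) {a : ℤ} (ha : Even a) :
    (r * (p ^ a * q * r)) ^ 2 = q ^ 2 := by
  have h1 : r * (p ^ a * q * r) = q ^ 2 * (p ^ a * q) := by
    calc r * (p ^ a * q * r) = (r * p ^ a) * q * r := by simp only [mul_assoc]
      _ = p ^ a * (r * q) * r := by rw [D.r_mul_even ha]; simp only [mul_assoc]
      _ = p ^ a * q ^ 2 * q * (r * r) := by rw [D.r_mul_q]; simp only [mul_assoc]
      _ = _ := by rw [D.z_comm, D.r_mul_r, mul_one, mul_assoc]
  have hc : Commute (q ^ 2) (p ^ a * q) := (D.z_comm _).symm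
  rw [h1, hc.mul_pow, pow_two (q ^ 2), D.z_mul_z, one_mul, D.sq_pq_even ha]

/-! ### Involutions -/

theorem exists_normal_form (D : D17Data m p q r) (g : G) :
    ∃ d a b c : ℤ, g = (q ^ 2) ^ d * (p ^ a * q ^ b * r ^ c) := by
  have hz : ∀ (d : ℤ) (g : G), g * (q ^ 2) ^ d = (q ^ 2) ^ d * g := fun d g =>
    (Subgroup.mem_center_iff.1 (Subgroup.zpow_mem _ D.z_mem_center d) g)
  have hrq : ∀ b : ℤ, r * q ^ b = q ^ (-b) * r := fun b => by
    have h1 : r * q * r⁻¹ = q⁻¹ := by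
      rw [mul_inv_eq_iff_eq_mul, D.r_mul_q, ← mul_assoc]
      congr 1
      rw [eq_inv_iff_mul_eq_one, mul_assoc, ← pow_two, D.z_mul_z]
    rw [← mul_inv_eq_iff_eq_mul, ← conj_zpow, h1, inv_zpow']
  have hQ : ∀ g, (∃ d a b c : ℤ, g = (q ^ 2) ^ d * (p ^ a * q ^ b * r ^ c)) →
      ∃ d a b c : ℤ, q * g = (q ^ 2) ^ d * (p ^ a * q ^ b * r ^ c) := by
    rintro _ ⟨d, a, b, c, rfl⟩
    refine ⟨d + a, -a, 1 + b, c, ?_⟩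
    rw [← mul_assoc, hz, mul_assoc, ← mul_assoc q, ← mul_assoc q, D.q_mul_zpow, zpow_add, zpow_add,
      zpow_one]
    simp only [mul_assoc]
  have hR : ∀ g, (∃ d a b c : ℤ, g = (q ^ 2) ^ d * (p ^ a * q ^ b * r ^ c)) →
      ∃ d a b c : ℤ, r * g = (q ^ 2) ^ d * (p ^ a * q ^ b * r ^ c) := by
    rintro _ ⟨d, a, b, c, rfl⟩
    refine ⟨d + a, a + 2 ^ (m - 4) * a, -b, 1 + c, ?_⟩
    calc _ = (r * (q ^ 2) ^ d) * (p ^ a * q ^ b * r ^ c) := (mul_assoc _ _ _).symm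
      _ = (q ^ 2) ^ d * ((r * p ^ a) * (q ^ b * r ^ c)) := by rw [hz]; simp only [mul_assoc]
      _ = (q ^ 2) ^ d * ((q ^ 2) ^ a * (p ^ (a + 2 ^ (m - 4) * a)) * (r * q ^ b) * r ^ c) := by
          rw [D.r_mul_zpow]; simp only [mul_assoc]
      _ = _ := by
          rw [hrq, zpow_add (q ^ 2), zpow_add r, zpow_one]; simp only [mul_assoc]
  have hP : ∀ (e : ℤ) g, (∃ d a b c : ℤ, g = (q ^ 2) ^ d * (p ^ a * q ^ b * r ^ c)) →
      ∃ d a b c : ℤ, p ^ e * g = (q ^ 2) ^ d * (p ^ a * q ^ b * r ^ c) := by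
    rintro e _ ⟨d, a, b, c, rfl⟩
    refine ⟨d, e + a, b, c, ?_⟩
    rw [← mul_assoc, hz, zpow_add]; simp only [mul_assoc]
  have hg : g ∈ Subgroup.closure {p, q, r} := by rw [D.gen]; trivial
  induction hg using Subgroup.closure_induction_left with
  | one => exact ⟨0, 0, 0, 0, by simp⟩
  | mul_left x hx y _ ih =>
    rcases hx with rfl | rfl | rfl
    · simpa using hP 1 y ih
    · exact hQ y ih
    · exact hR y ih
  | inv_mul_cancel x hx y _ ih =>
    rcases hx with rfl | rfl | rfl
    · simpa using hP (-1) y ih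
    · -- `q⁻¹ = q ^ 3`
      have : x⁻¹ * y = x * (x * (x * y)) := by
        rw [inv_mul_eq_iff_eq_mul]
        calc y = x ^ 4 * y := by rw [D.q_four, one_mul]
          _ = _ := by simp only [pow_succ, pow_zero, one_mul, mul_assoc]
      rw [this]
      exact hQ _ (hQ _ (hQ y ih))
    · rw [inv_eq_of_mul_eq_one_left D.r_mul_r]
      exact hR y ih

/-- `s` and `x` differ by a central factor whose square is `1`. -/
def Twist (s x : G) : Prop := ∃ c ∈ Subgroup.center G, c ^ 2 = 1 ∧ s = c * x

theorem Twist.sq {s x : G} (h : Twist s x) : s ^ 2 = x ^ 2 := by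
  obtain ⟨c, hc, h2, rfl⟩ := h
  have : Commute c x := (Subgroup.mem_center_iff.1 hc x).symm
  rw [this.mul_pow, h2, one_mul]

theorem Twist.mul {s t x y : G} (h : Twist s x) (h' : Twist t y) : Twist (s * t) (x * y) := by
  obtain ⟨c, hc, h2, rfl⟩ := h
  obtain ⟨c', hc', h2', rfl⟩ := h'
  have h3 : Commute c c' := (Subgroup.mem_center_iff.1 hc c').symm
  refine ⟨c * c', Subgroup.mul_mem _ hc hc', by rw [h3.mul_pow, h2, h2', one_mul], ?_⟩
  rw [mul_assoc, ← mul_assoc x, Subgroup.mem_center_iff.1 hc' x]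
  simp only [mul_assoc]

/-- Every involution is central, or a central translate of `r`, of `p ^ a * q` with `a` odd, or of
`p ^ a * q * r` with `a` even. -/
theorem involution_cases (D : D17Data m p q r) {s : G} (hs : s ^ 2 = 1) :
    s ∈ Subgroup.center G ∨ Twist s r ∨ (∃ a : ℤ, Odd a ∧ Twist s (p ^ a * q)) ∨
      ∃ a : ℤ, Even a ∧ Twist s (p ^ a * q * r) := by
  obtain ⟨d, a, b, c, h⟩ := D.exists_normal_form s
  have key : ∃ d' : ℤ, s = (q ^ 2) ^ d' * (p ^ a * q ^ (b % 2) * r ^ (c % 2)) := by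
    refine ⟨d + b / 2, ?_⟩
    have hq : q ^ b = (q ^ 2) ^ (b / 2) * q ^ (b % 2) := by
      rw [← zpow_natCast, ← zpow_mul, ← zpow_add]; congr 1; push_cast; omega
    have hr : r ^ c = r ^ (c % 2) := by
      conv_lhs => rw [← Int.mul_ediv_add_emod c 2, zpow_add, zpow_mul, zpow_ofNat, D.r_sq, one_zpow, one_mul]
    have hz := Subgroup.mem_center_iff.1 (Subgroup.zpow_mem _ D.z_mem_center (b / 2)) (p ^ a)
    rw [h, hq, hr, zpow_add, ← mul_assoc (p ^ a), hz]
    simp only [mul_assoc]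
  obtain ⟨d', hd⟩ := key
  have hzc := Subgroup.zpow_mem _ D.z_mem_center d'
  have hz2 : ((q ^ 2) ^ d') ^ 2 = 1 := by
    rw [← zpow_natCast, ← zpow_mul]; exact D.z_zpow_even ⟨d', by push_cast; ring⟩
  have hT : Twist s (p ^ a * q ^ (b % 2) * r ^ (c % 2)) := ⟨_, hzc, hz2, hd⟩
  have hsq := hT.sq
  rw [hs] at hsq
  rcases Int.emod_two_eq_zero_or_one b with hb | hb <;>
    rcases Int.emod_two_eq_zero_or_one c with hc | hc <;>
    simp only [hb, hc, zpow_zero, zpow_one, mul_one] at hd hT hsq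
  · left
    have : p ^ (2 * a) = 1 := by rw [hsq, ← zpow_natCast, ← zpow_mul, mul_comm]; simp
    rw [hd]
    exact Subgroup.mul_mem _ hzc (D.mem_center_of_zpow_sq this)
  · right; left
    rcases Int.even_or_odd a with ha | ha
    · rw [D.sq_pr_even ha] at hsq
      have hc2 := D.mem_center_of_zpow_sq hsq.symm
      have h2 : (p ^ a) ^ 2 = 1 := by
        rw [hsq, ← zpow_natCast, ← zpow_mul, mul_comm]; simp
      have h1 : Twist ((q ^ 2) ^ d') 1 := ⟨_, hzc, hz2, by simp⟩
      have h3 : Twist (p ^ a * r) r := ⟨_, hc2, h2, rfl⟩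
      have := h1.mul h3
      rwa [← hd, one_mul] at this
    · have := D.pow_four_pr_odd ha
      rw [← hsq, one_pow] at this
      exact absurd this.symm (D.p_zpow_four_mul_ne ha)
  · right; right; left
    refine ⟨a, ?_, hT⟩
    by_contra ha
    rw [Int.not_odd_iff_even] at ha
    rw [D.sq_pq_even ha] at hsq
    exact D.q_sq_ne hsq.symm
  · right; right; right
    refine ⟨a, ?_, hT⟩
    by_contra ha
    rw [Int.not_even_iff_odd] at ha
    exact D.sq_pqr_odd ha hsq.symm

end D17Data

/-- `ζ` is an even power of `s * t`. -/
def EvenPow {G : Type*} [Group G] (ζ s t : G) : Prop := ∃ x : ℤ, (s * t) ^ (2 * x) = ζ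

theorem EvenPow.of_sq {G : Type*} [Group G] {ζ s t g : G} (h : (s * t) ^ 2 = g) {x : ℤ}
    (hx : g ^ x = ζ) : EvenPow ζ s t :=
  ⟨x, by rw [zpow_mul, zpow_ofNat, h, hx]⟩

theorem EvenPow.symm {G : Type*} [Group G] {ζ s t : G} (hs : s ^ 2 = 1) (ht : t ^ 2 = 1)
    (h : EvenPow ζ s t) : EvenPow ζ t s := by
  obtain ⟨x, hx⟩ := h
  have h1 : s⁻¹ = s := inv_eq_of_mul_eq_one_left (by rw [← pow_two, hs])
  have h2 : t⁻¹ = t := inv_eq_of_mul_eq_one_left (by rw [← pow_two, ht])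
  refine ⟨-x, ?_⟩
  have : t * s = (s * t)⁻¹ := by rw [mul_inv_rev, h1, h2]
  rw [this, inv_zpow', mul_neg, neg_neg, hx]

theorem sq_eq_one_of_commute {G : Type*} [Group G] {s t : G} (hs : s ^ 2 = 1) (ht : t ^ 2 = 1)
    (h : Commute s t) : (s * t) ^ 2 = 1 := by rw [h.mul_pow, hs, ht, one_mul]

theorem commute_of_sq_eq_one {G : Type*} [Group G] {s t : G} (hs : s ^ 2 = 1) (ht : t ^ 2 = 1)
    (h : (s * t) ^ 2 = 1) : Commute s t := by
  have h1 : s⁻¹ = s := inv_eq_of_mul_eq_one_left (by rw [← pow_two, hs])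
  have h2 : t⁻¹ = t := inv_eq_of_mul_eq_one_left (by rw [← pow_two, ht])
  have h3 : s * t = (s * t)⁻¹ := by rw [eq_inv_iff_mul_eq_one, ← pow_two, h]
  rwa [mul_inv_rev, h1, h2] at h3

namespace D17Data

variable {G : Type*} [Group G] {m : ℕ} {p q r : G}

/-- In a connected string diagram one of `h = p ^ 2 ^ (m - 4)` and `z = q ^ 2` is an even power of
both adjacent products. Two non-commuting involutions produce `h`, unless one is of type `r` and
the other of type `p ^ a * q * r`, when they produce `z`; commutation of `s₀` and `s₂` excludes
the mixed diagrams. -/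
theorem common_evenPow (D : D17Data m p q r) {s₀ s₁ s₂ : G} (h₀ : s₀ ^ 2 = 1) (h₁ : s₁ ^ 2 = 1)
    (h₂ : s₂ ^ 2 = 1) (h02 : Commute s₀ s₂) (h01 : ¬ Commute s₀ s₁) (h12 : ¬ Commute s₁ s₂) :
    (EvenPow (p ^ (2 ^ (m - 4) : ℤ)) s₀ s₁ ∧ EvenPow (p ^ (2 ^ (m - 4) : ℤ)) s₁ s₂) ∨
      (EvenPow (q ^ 2) s₀ s₁ ∧ EvenPow (q ^ 2) s₁ s₂) := by
  set h : G := p ^ (2 ^ (m - 4) : ℤ) with hh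
  set R : G → Prop := fun s => s ^ 2 = 1 ∧ Twist s r with hR
  set Q : G → Prop := fun s => s ^ 2 = 1 ∧ ∃ a : ℤ, Odd a ∧ Twist s (p ^ a * q) with hQ
  set T : G → Prop := fun s => s ^ 2 = 1 ∧ ∃ a : ℤ, Even a ∧ Twist s (p ^ a * q * r) with hT
  have central : ∀ {s t : G}, ¬ Commute s t → s ∉ Subgroup.center G := fun hn hs =>
    hn (Subgroup.mem_center_iff.1 hs _).symm
  have classify : ∀ {s : G}, s ^ 2 = 1 → s ∉ Subgroup.center G → R s ∨ Q s ∨ T s := by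
    intro s hs hc
    rcases D.involution_cases hs with h | h | h | h
    exacts [absurd h hc, .inl ⟨hs, h⟩, .inr (.inl ⟨hs, h⟩), .inr (.inr ⟨hs, h⟩)]
  have RR : ∀ s t, R s → R t → Commute s t := by
    rintro s t ⟨hs, s1⟩ ⟨ht, t1⟩
    exact commute_of_sq_eq_one hs ht (by rw [(s1.mul t1).sq, D.r_mul_r, one_pow])
  have RQ : ∀ s t, R s → Q t → ¬ Commute s t ∧ EvenPow h s t ∧ EvenPow h t s := by
    rintro s t ⟨hs, s1⟩ ⟨ht, a, ha, t1⟩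
    have hsq : (s * t) ^ 2 = h := by rw [(s1.mul t1).sq, D.sq_r_pq ha]
    have he : EvenPow h s t := .of_sq hsq (zpow_one h)
    refine ⟨fun hc => D.h_ne_one ?_, he, he.symm hs ht⟩
    rw [← hh, ← hsq, sq_eq_one_of_commute hs ht hc]
  have RT : ∀ s t, R s → T t → ¬ Commute s t ∧ EvenPow (q ^ 2) s t ∧ EvenPow (q ^ 2) t s := by
    rintro s t ⟨hs, s1⟩ ⟨ht, a, ha, t1⟩
    have hsq : (s * t) ^ 2 = q ^ 2 := by rw [(s1.mul t1).sq, D.sq_r_pqr ha]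
    have he : EvenPow (q ^ 2) s t := .of_sq hsq (zpow_one _)
    refine ⟨fun hc => D.q_sq_ne ?_, he, he.symm hs ht⟩
    rw [← hsq, sq_eq_one_of_commute hs ht hc]
  have pp : ∀ {s t : G} {k : ℤ}, s ^ 2 = 1 → t ^ 2 = 1 → (s * t) ^ 2 = (p ^ k) ^ 2 →
      ¬ Commute s t → EvenPow h s t := by
    intro s t k hs ht hsq hc
    rw [← zpow_natCast (p ^ k), ← zpow_mul] at hsq
    obtain ⟨x, hx⟩ := D.exists_zpow_eq_h (k := k * (2 : ℕ)) fun h1 =>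
      hc (commute_of_sq_eq_one hs ht (hsq.trans h1))
    exact .of_sq hsq hx
  have QQ : ∀ s t, Q s → Q t → ¬ Commute s t → EvenPow h s t := by
    rintro s t ⟨hs, a, ha, s1⟩ ⟨ht, b, hb, t1⟩
    exact pp hs ht (by rw [(s1.mul t1).sq, D.pq_mul_pq a hb])
  have TT : ∀ s t, T s → T t → ¬ Commute s t → EvenPow h s t := by
    rintro s t ⟨hs, a, ha, s1⟩ ⟨ht, b, hb, t1⟩
    exact pp hs ht (by rw [(s1.mul t1).sq, D.pqr_mul_pqr a hb])
  have QT : ∀ s t, Q s → T t → ¬ Commute s t ∧ EvenPow h s t ∧ EvenPow h t s := by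
    rintro s t ⟨hs, a, ha, s1⟩ ⟨ht, b, hb, t1⟩
    have hsq : ((s * t) ^ 2) ^ 2 = p ^ (4 * (a - b)) := by
      have hz : Twist (q ^ 2 * (p ^ (a - b) * r)) (p ^ (a - b) * r) :=
        ⟨_, D.z_mem_center, by rw [pow_two (q ^ 2), D.z_mul_z], rfl⟩
      rw [(s1.mul t1).sq, D.pq_mul_pqr a hb, hz.sq, D.pow_four_pr_odd (ha.sub_even hb)]
    have hne := D.p_zpow_four_mul_ne (ha.sub_even hb)
    obtain ⟨x, hx⟩ := D.exists_zpow_eq_h hne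
    have he : EvenPow h s t := by
      refine .of_sq rfl (x := 2 * x) ?_
      rw [zpow_mul, zpow_ofNat, hsq, hx]
    refine ⟨fun hc => hne ?_, he, he.symm hs ht⟩
    rw [← hsq, sq_eq_one_of_commute hs ht hc, one_pow]
  have c0 := classify h₀ (central h01)
  have c1 := classify h₁ (central h12)
  have c2 := classify h₂ (central fun hc => h12 (Commute.symm hc))
  have h20 := h02.symm
  clear_value R Q T
  rcases c1 with c1 | c1 | c1 <;> rcases c0 with c0 | c0 | c0 <;> rcases c2 with c2 | c2 | c2 <;>
    grind

theorem string_diagram (D : D17Data m p q r) {s₀ s₁ s₂ : G} (h₀ : s₀ ^ 2 = 1) (h₁ : s₁ ^ 2 = 1)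
    (h₂ : s₂ ^ 2 = 1) (h02 : Commute s₀ s₂) (h01 : ¬ Commute s₀ s₁) (h12 : ¬ Commute s₁ s₂) :
    ∃ ζ : G, ζ ∈ Subgroup.center G ∧ ζ ^ 2 = 1 ∧ ζ ≠ 1 ∧
      ∃ x₁ x₂ : ℤ, (s₀ * s₁) ^ (2 * x₁) = ζ ∧ (s₁ * s₂) ^ (2 * x₂) = ζ := by
  rcases D.common_evenPow h₀ h₁ h₂ h02 h01 h12 with ⟨⟨x, hx⟩, y, hy⟩ | ⟨⟨x, hx⟩, y, hy⟩
  · exact ⟨_, D.h_mem_center, D.h_sq, D.h_ne_one, x, y, hx, hy⟩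
  · exact ⟨_, D.z_mem_center, by rw [pow_two (q ^ 2), D.z_mul_z], D.q_sq_ne, x, y, hx, hy⟩

end D17Data

/-! ### The presented group -/

/-- Universal property: a triple satisfying the seven relations gives a homomorphism. -/
theorem D17grp_exists_hom {H : Type*} [Group H] (m : ℕ) (f : Fin 3 → H)
    (h1 : f 0 ^ 2 ^ (m - 3) = 1) (h2 : f 1 ^ 4 = 1) (h3 : f 2 ^ 2 = 1)
    (h4 : f 0 * f 1 = f 1 * (f 1 ^ 2 * (f 0)⁻¹)) (h5 : f 0 * f 1 ^ 2 = f 1 ^ 2 * f 0)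
    (h6 : f 0 * f 2 = f 2 * (f 1 ^ 2 * f 0 ^ (1 + 2 ^ (m - 4))))
    (h7 : f 1 * f 2 = f 2 * f 1 ^ 3) :
    ∃ φ : D17grp m →* H, ∀ i, φ (PresentedGroup.of i) = f i := by
  have hrel : ∀ x ∈ D17rels m, FreeGroup.lift f x = 1 := by
    intro x hx
    simp only [D17rels, Set.mem_insert_iff, Set.mem_singleton_iff] at hx
    rcases hx with rfl | rfl | rfl | rfl | rfl | rfl | rfl <;>
      simp only [map_mul, map_pow, map_inv, FreeGroup.lift_apply_of]
    · exact h1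
    · exact h2
    · exact h3
    all_goals rw [mul_inv_eq_one, mul_assoc, inv_mul_eq_iff_eq_mul]
    exacts [h4, h5, h6, h7]
  exact ⟨PresentedGroup.toGroup hrel, fun i => PresentedGroup.toGroup.of hrel⟩

theorem D17grp_rel {m : ℕ} {x : FreeGroup (Fin 3)} (hx : x ∈ D17rels m) :
    PresentedGroup.mk (D17rels m) x = 1 :=
  PresentedGroup.one_of_mem hx

/-- The affine action on `ZMod (2 ^ (m - 3))`, with `p`, `q`, `r` acting as `x + 1`, `-x` and
`(1 + 2 ^ (m - 4)) * x`, is faithful on `⟨p⟩`. -/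
theorem D17grp_p_order {m : ℕ} (hm : 7 ≤ m) {k : ℤ}
    (hk : (PresentedGroup.of 0 : D17grp m) ^ k = 1) : (2 ^ (m - 3) : ℤ) ∣ k := by
  set N := 2 ^ (m - 3) with hN
  set u : ZMod N := 2 ^ (m - 4) with hu
  have hNz : (2 : ZMod N) ^ (m - 3) = 0 := by
    have := ZMod.natCast_self N
    rw [hN] at this
    push_cast at this
    exact this
  have h2u : 2 * u = 0 := by
    rw [hu, ← pow_succ', show m - 4 + 1 = m - 3 by omega, hNz]
  have huu : u * u = 0 := by
    rw [hu, ← pow_add, show m - 4 + (m - 4) = (m - 3) + (m - 5) by omega, pow_add, hNz, zero_mul]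
  have hinv : ∀ x : ZMod N, (1 + u) * ((1 + u) * x) = x := fun x => by
    linear_combination x * h2u + x * huu
  let P : Equiv.Perm (ZMod N) := Equiv.addRight 1
  let Q : Equiv.Perm (ZMod N) := Equiv.neg _
  let R : Equiv.Perm (ZMod N) := ⟨fun x => (1 + u) * x, fun x => (1 + u) * x, hinv, hinv⟩
  have hP : ∀ (j : ℕ) x, (P ^ j) x = x + j := by
    intro j
    induction j with
    | zero => intro x; simp
    | succ j ih => intro x; rw [pow_succ, Equiv.Perm.mul_apply, ih]; simp [P]; ring
  have hPi : ∀ x, P⁻¹ x = x - 1 := fun x => by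
    rw [Equiv.Perm.inv_eq_iff_eq]; simp [P]
  have hQ : Q ^ 2 = 1 := by ext x; simp [Q, pow_two]
  have hQa : ∀ x, Q x = -x := fun x => rfl
  have hRa : ∀ x, R x = (1 + u) * x := fun x => rfl
  obtain ⟨φ, hφ⟩ := D17grp_exists_hom m ![P, Q, R]
    (by
      refine Equiv.ext fun x => ?_
      change (P ^ 2 ^ (m - 3)) x = x
      rw [hP]; push_cast; rw [hNz, add_zero])
    (by change Q ^ 4 = 1; rw [show 4 = 2 * 2 from rfl, pow_mul, hQ, one_pow])
    (by
      refine Equiv.ext fun x => ?_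
      change (R ^ 2) x = x
      rw [pow_two, Equiv.Perm.mul_apply, hRa, hRa, hinv])
    (by
      refine Equiv.ext fun x => ?_
      change (P * Q) x = (Q * (Q ^ 2 * P⁻¹)) x
      rw [hQ, one_mul, Equiv.Perm.mul_apply, Equiv.Perm.mul_apply, hPi, hQa, hQa]
      change -x + 1 = _
      ring)
    (by change P * Q ^ 2 = Q ^ 2 * P; rw [hQ, one_mul, mul_one])
    (by
      refine Equiv.ext fun x => ?_
      change (P * R) x = (R * (Q ^ 2 * P ^ (1 + 2 ^ (m - 4)))) x
      rw [hQ, one_mul, Equiv.Perm.mul_apply, Equiv.Perm.mul_apply, hP, hRa, hRa]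
      push_cast
      rw [← hu]
      change (1 + u) * x + 1 = _
      linear_combination -h2u - huu)
    (by
      refine Equiv.ext fun x => ?_
      change (Q * R) x = (R * Q ^ 3) x
      rw [pow_succ, hQ, one_mul, Equiv.Perm.mul_apply, Equiv.Perm.mul_apply, hQa, hQa, hRa, hRa]
      ring)
  have hPk : P ^ k = 1 := by
    have := congrArg φ hk
    rwa [map_zpow, hφ, map_one] at this
  have hPz : ∀ j : ℤ, (P ^ j) 0 = (j : ZMod N) := by
    intro j
    cases j with
    | ofNat j => simp [hP]
    | negSucc j =>
      rw [zpow_negSucc, Equiv.Perm.inv_eq_iff_eq, hP]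
      push_cast
      ring
  have h0 : (k : ZMod N) = 0 := by rw [← hPz, hPk]; rfl
  rw [ZMod.intCast_zmod_eq_zero_iff_dvd] at h0
  rw [hN] at h0
  exact_mod_cast h0

/-- `q ^ 2` survives in the quotient of `D17grp m` isomorphic to the dihedral group of order `8`,
where `p` is a reflection, `q` a rotation of order `4` and `r = p * q`. -/
theorem D17grp_q_sq_ne {m : ℕ} (hm : 7 ≤ m) : (PresentedGroup.of 1 : D17grp m) ^ 2 ≠ 1 := by
  have hs : (DihedralGroup.sr 0 : DihedralGroup 4) ^ 2 = 1 := by decide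
  have h3 : 2 ^ (m - 3) = 2 * 2 ^ (m - 4) := by rw [← pow_succ']; congr 1; omega
  have h4 : 2 ^ (m - 4) = 2 * 2 ^ (m - 5) := by rw [← pow_succ']; congr 1; omega
  obtain ⟨φ, hφ⟩ := D17grp_exists_hom m
    ![(DihedralGroup.sr 0 : DihedralGroup 4), DihedralGroup.r 1, DihedralGroup.sr 1]
    (by
      change (DihedralGroup.sr 0 : DihedralGroup 4) ^ _ = 1
      rw [h3, pow_mul, hs, one_pow])
    (by decide) (by decide) (by decide) (by decide)
    (by
      change (DihedralGroup.sr 0 : DihedralGroup 4) * DihedralGroup.sr 1 = DihedralGroup.sr 1 *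
        (DihedralGroup.r 1 ^ 2 * (DihedralGroup.sr 0 : DihedralGroup 4) ^ (1 + 2 ^ (m - 4)))
      rw [h4, pow_add, pow_mul, hs, one_pow]
      decide)
    (by decide)
  intro h
  have := congrArg φ h
  rw [map_pow, hφ, map_one] at this
  revert this
  decide

theorem D17grp_data {m : ℕ} (hm : 7 ≤ m) :
    D17Data m (PresentedGroup.of 0 : D17grp m) (PresentedGroup.of 1) (PresentedGroup.of 2) := by
  have rel : ∀ {x y : FreeGroup (Fin 3)}, x * y⁻¹ ∈ D17rels m →
      PresentedGroup.mk (D17rels m) x = PresentedGroup.mk (D17rels m) y := fun h => by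
    have := D17grp_rel h
    rwa [map_mul, map_inv, mul_inv_eq_one] at this
  refine ⟨hm, fun k => ⟨D17grp_p_order hm, ?_⟩, D17grp_rel (x := FreeGroup.of 1 ^ 4) (by simp [D17rels]),
    D17grp_rel (x := FreeGroup.of 2 ^ 2) (by simp [D17rels]),
    rel (x := (FreeGroup.of 1)⁻¹ * FreeGroup.of 0 * FreeGroup.of 1)
      (y := FreeGroup.of 1 ^ 2 * (FreeGroup.of 0)⁻¹) (by simp [D17rels]),
    rel (x := (FreeGroup.of 1 ^ 2)⁻¹ * FreeGroup.of 0 * FreeGroup.of 1 ^ 2)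
      (y := FreeGroup.of 0) (by simp [D17rels]),
    rel (x := (FreeGroup.of 2)⁻¹ * FreeGroup.of 0 * FreeGroup.of 2)
      (y := FreeGroup.of 1 ^ 2 * FreeGroup.of 0 ^ (1 + 2 ^ (m - 4))) (by simp [D17rels]),
    rel (x := (FreeGroup.of 2)⁻¹ * FreeGroup.of 1 * FreeGroup.of 2)
      (y := FreeGroup.of 1 ^ 3) (by simp [D17rels]), D17grp_q_sq_ne hm, ?_⟩
  · rintro ⟨e, rfl⟩
    have h : (PresentedGroup.of 0 : D17grp m) ^ 2 ^ (m - 3) = 1 :=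
      D17grp_rel (x := FreeGroup.of 0 ^ 2 ^ (m - 3)) (by simp [D17rels])
    rw [zpow_mul, show (2 : ℤ) ^ (m - 3) = ((2 ^ (m - 3) : ℕ) : ℤ) by push_cast; rfl,
      zpow_natCast, h, one_zpow]
  · rw [← PresentedGroup.closure_range_of (D17rels m)]
    congr 1
    ext x
    simp [Fin.exists_fin_succ, eq_comm]

/-- `D17grp m` has the elementary abelian quotient `(ℤ/2)³`, so two elements never generate it:
some nontrivial character with values in `ℤ/2` kills both. -/
theorem D17grp_closure_pair_ne_top {m : ℕ} (hm : 7 ≤ m) (g₁ g₂ : D17grp m) :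
    Subgroup.closure {g₁, g₂} ≠ ⊤ := by
  intro htop
  have h3 : 2 ^ (m - 3) = 2 * 2 ^ (m - 4) := by rw [← pow_succ']; congr 1; omega
  have h4 : 2 ^ (m - 4) = 2 * 2 ^ (m - 5) := by rw [← pow_succ']; congr 1; omega
  have hsq : ∀ x : Multiplicative (ZMod 2), x ^ 2 = 1 := by decide
  have hinv : ∀ x : Multiplicative (ZMod 2), x⁻¹ = x := by decide
  have hex : ∀ i : Fin 3, ∃ φ : D17grp m →* Multiplicative (ZMod 2), ∀ j,
      φ (PresentedGroup.of j) = if j = i then Multiplicative.ofAdd 1 else 1 := by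
    intro i
    apply D17grp_exists_hom m
    · rw [h3, pow_mul, hsq, one_pow]
    · rw [show 4 = 2 * 2 from rfl, pow_mul, hsq]
    · exact hsq _
    · rw [hsq, one_mul, hinv, mul_comm]
    · exact mul_comm _ _
    · rw [hsq, one_mul, h4, pow_add, pow_mul, hsq, one_pow, mul_one, pow_one, mul_comm]
    · rw [pow_succ, hsq, one_mul, mul_comm]
  choose φ hφ using hex
  have lin : ∀ v w : Fin 3 → Multiplicative (ZMod 2), ∃ e : Fin 3 → Fin 2, e ≠ 0 ∧
      ∏ i, v i ^ (e i : ℕ) = 1 ∧ ∏ i, w i ^ (e i : ℕ) = 1 := by decide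
  obtain ⟨e, he, h1, h2⟩ := lin (fun i => φ i g₁) (fun i => φ i g₂)
  let χ : D17grp m →* Multiplicative (ZMod 2) := ∏ i, φ i ^ (e i : ℕ)
  have hχ : ∀ g, χ g = ∏ i, φ i g ^ (e i : ℕ) := fun g => by
    simp [χ, MonoidHom.finsetProd_apply]
  have hker : Subgroup.closure {g₁, g₂} ≤ χ.ker := by
    rw [Subgroup.closure_le]
    rintro x (rfl | rfl)
    · exact (hχ _).trans h1
    · exact (hχ _).trans h2
  rw [htop] at hker
  apply he
  funext j
  have hj : χ (PresentedGroup.of j) = 1 := hker (Subgroup.mem_top _)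
  rw [hχ] at hj
  simp only [hφ] at hj
  rw [Finset.prod_eq_single j (fun i _ hij => by rw [if_neg hij.symm, one_pow])
    (fun h => absurd (Finset.mem_univ j) h), if_pos rfl] at hj
  change e j = 0
  revert hj
  generalize e j = k
  revert k
  decide

/-- If `ζ` is a power of both `s₀ * s₁` and `s₁ * s₂`, the intersection condition puts it in
`{1, s₁}`, but `s₁` is not central. -/
theorem D17grp_not_stringC {m : ℕ} (hm : 7 ≤ m) (n : ℕ) (s : Fin n → D17grp m) :
    ¬ (IsStringCGroup s ∧ IsConnectedFamily s) := by
  rintro ⟨⟨-, hinvol, hgen, hstr, hint⟩, hconn⟩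
  by_cases hn : n ≤ 2
  · have hsub : ∃ g₁ g₂ : D17grp m, Set.range s ⊆ {g₁, g₂} := by
      interval_cases n
      · exact ⟨1, 1, by rintro _ ⟨i, -⟩; exact i.elim0⟩
      · exact ⟨s 0, 1, by rintro _ ⟨i, rfl⟩; fin_cases i; simp⟩
      · exact ⟨s 0, s 1, by rintro _ ⟨i, rfl⟩; fin_cases i <;> simp⟩
    obtain ⟨g₁, g₂, h⟩ := hsub
    refine D17grp_closure_pair_ne_top hm g₁ g₂ (top_le_iff.1 ?_)
    rw [← hgen]
    exact Subgroup.closure_mono h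
  · push Not at hn
    let i₀ : Fin n := ⟨0, by omega⟩
    let i₁ : Fin n := ⟨1, by omega⟩
    let i₂ : Fin n := ⟨2, by omega⟩
    have nc : ∀ {i j : Fin n}, 2 < orderOf (s i * s j) → ¬ Commute (s i) (s j) := by
      intro i j h hc
      have := orderOf_le_of_pow_eq_one two_pos
        (sq_eq_one_of_commute (hinvol i).2 (hinvol j).2 hc)
      omega
    have h01 : ¬ Commute (s i₀) (s i₁) := nc (hconn 0 (by omega) (by omega))
    have h12 : ¬ Commute (s i₁) (s i₂) := nc (hconn 1 (by omega) (by omega))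
    obtain ⟨ζ, hζ, -, hne, x₁, x₂, e₁, e₂⟩ := (D17grp_data hm).string_diagram
      (hinvol i₀).2 (hinvol i₁).2 (hinvol i₂).2 (hstr i₀ i₂ le_rfl) h01 h12
    have mem : ∀ {J : Set (Fin n)} {i : Fin n}, i ∈ J → s i ∈ Subgroup.closure (s '' J) :=
      fun hi => Subgroup.subset_closure (Set.mem_image_of_mem s hi)
    have m₁ : ζ ∈ Subgroup.closure (s '' {i₀, i₁}) := by
      rw [← e₁]
      exact Subgroup.zpow_mem _ (Subgroup.mul_mem _ (mem (by simp)) (mem (by simp))) _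
    have m₂ : ζ ∈ Subgroup.closure (s '' {i₁, i₂}) := by
      rw [← e₂]
      exact Subgroup.zpow_mem _ (Subgroup.mul_mem _ (mem (by simp)) (mem (by simp))) _
    have hset : ({i₀, i₁} ∩ {i₁, i₂} : Set (Fin n)) = {i₁} := by
      ext x
      simp only [Set.mem_inter_iff, Set.mem_insert_iff, Set.mem_singleton_iff, Fin.ext_iff,
        i₀, i₁, i₂]
      omega
    have m₃ : ζ ∈ Subgroup.closure (s '' ({i₀, i₁} ∩ {i₁, i₂})) := by
      rw [← hint]; exact ⟨m₁, m₂⟩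
    rw [hset, Set.image_singleton, Subgroup.mem_closure_singleton] at m₃
    obtain ⟨k, hk⟩ := m₃
    have hs1 := (hinvol i₁).2
    rcases Int.even_or_odd' k with ⟨l, rfl | rfl⟩
    · apply hne
      rw [← hk, zpow_mul, zpow_ofNat, hs1, one_zpow]
    · rw [zpow_add, zpow_mul, zpow_ofNat, hs1, one_zpow, one_mul, zpow_one] at hk
      exact h12 (Subgroup.mem_center_iff.1 (hk ▸ hζ) (s i₂)).symm

/-- For m ≥ 7, in the group ℳ_{II-D,17}(m), for all involutions
s₀, s₁, s₂ forming a connected string diagram there are a central involution ζ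
and integers x₁, x₂ with (s₀s₁)^(2x₁) = ζ = (s₁s₂)^(2x₂); in particular
ℳ_{II-D,17}(m) is not a connected string C-group with respect to any family of
distinguished generators. -/
theorem stmt_19 (m : ℕ) (hm : 7 ≤ m) :
    (∀ s₀ s₁ s₂ : D17grp m,
      s₀ ^ 2 = 1 → s₀ ≠ 1 → s₁ ^ 2 = 1 → s₁ ≠ 1 → s₂ ^ 2 = 1 → s₂ ≠ 1 →
      Commute s₀ s₂ → ¬ Commute s₀ s₁ → ¬ Commute s₁ s₂ →
      ∃ ζ : D17grp m, ζ ∈ Subgroup.center (D17grp m) ∧ ζ ^ 2 = 1 ∧ ζ ≠ 1 ∧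
        ∃ x₁ x₂ : ℤ, (s₀ * s₁) ^ (2 * x₁) = ζ ∧ (s₁ * s₂) ^ (2 * x₂) = ζ) ∧
    (∀ (n : ℕ) (s : Fin n → D17grp m),
      ¬ (IsStringCGroup s ∧ IsConnectedFamily s)) := by
  exact ⟨fun _ _ _ h₀ _ h₁ _ h₂ _ h02 h01 h12 =>
    (D17grp_data hm).string_diagram h₀ h₁ h₂ h02 h01 h12, D17grp_not_stringC hm⟩
end
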